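/- arXiv:1808.00587 — 2 statements merged into one kernel-verified Lean document; each statement's English description precedes it below -/
import Mathlib

section
/- Suppose n_B = dim B ≥ 1. Then there exists μ̃ > 0 such that for every 0 < μ < μ̃ one has λ_{[n_B]}(X^μ) > λ_{[n_B+1]}(X^μ), so the span R_B^μ of eigenvectors corresponding to the n_B largest eigenvalues of X^μ is well defined, and dist(R_B^μ, B) → 0 as μ → 0+. Analogously, if n_N = dim N ≥ 1, then for all sufficiently small μ > 0 the span R_N^μ of eigenvectors corresponding to the n_N largest eigenvalues of S^μ is well defined and dist(R_N^μ, N) → 0 as μ → 0+. -/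
open Matrix Set

noncomputable section

variable {n m : ℕ}

/-- Feasibility for the primal SDO problem `(P_ε)` (the feasible set does not depend on `ε`). -/
def PrimalFeasible (A : Fin m → Matrix (Fin n) (Fin n) ℝ) (b : Fin m → ℝ)
    (X : Matrix (Fin n) (Fin n) ℝ) : Prop :=
  X.IsSymm ∧ (∀ i, ((A i) * X).trace = b i) ∧ X.PosSemidef

/-- Feasibility for the dual SDO problem `(D_ε)`. -/
def DualFeasible (C Cbar : Matrix (Fin n) (Fin n) ℝ)
    (A : Fin m → Matrix (Fin n) (Fin n) ℝ) (ε : ℝ)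
    (y : Fin m → ℝ) (S : Matrix (Fin n) (Fin n) ℝ) : Prop :=
  S.IsSymm ∧ (∑ i, y i • A i) + S = C + ε • Cbar ∧ S.PosSemidef

/-- The optimal value function `v(ε)` of `(P_ε)`, with values in `EReal`. -/
def vfun (C Cbar : Matrix (Fin n) (Fin n) ℝ) (A : Fin m → Matrix (Fin n) (Fin n) ℝ)
    (b : Fin m → ℝ) (ε : ℝ) : EReal :=
  sInf ((fun X => (((C + ε • Cbar) * X).trace : EReal)) '' {X | PrimalFeasible A b X})

/-- `E = {ε : v(ε) > -∞}`. -/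
def Eset (C Cbar : Matrix (Fin n) (Fin n) ℝ) (A : Fin m → Matrix (Fin n) (Fin n) ℝ)
    (b : Fin m → ℝ) : Set ℝ :=
  {ε | ⊥ < vfun C Cbar A b ε}

/-- The primal optimal set `P*(ε)`. -/
def PrimalOpt (C Cbar : Matrix (Fin n) (Fin n) ℝ) (A : Fin m → Matrix (Fin n) (Fin n) ℝ)
    (b : Fin m → ℝ) (ε : ℝ) : Set (Matrix (Fin n) (Fin n) ℝ) :=
  {X | PrimalFeasible A b X ∧ ∀ X', PrimalFeasible A b X' →
    ((C + ε • Cbar) * X).trace ≤ ((C + ε • Cbar) * X').trace}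

/-- The dual optimal set `D*(ε)`. -/
def DualOpt (C Cbar : Matrix (Fin n) (Fin n) ℝ) (A : Fin m → Matrix (Fin n) (Fin n) ℝ)
    (b : Fin m → ℝ) (ε : ℝ) : Set ((Fin m → ℝ) × Matrix (Fin n) (Fin n) ℝ) :=
  {p | DualFeasible C Cbar A ε p.1 p.2 ∧ ∀ y' S', DualFeasible C Cbar A ε y' S' →
    ∑ i, b i * y' i ≤ ∑ i, b i * p.1 i}

/-- A maximally complementary optimal solution: `X` lies in the relative interior of `P*(ε)`
and `(y, S)` in the relative interior of `D*(ε)`. -/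
def MaxComp (C Cbar : Matrix (Fin n) (Fin n) ℝ) (A : Fin m → Matrix (Fin n) (Fin n) ℝ)
    (b : Fin m → ℝ) (ε : ℝ) (X : Matrix (Fin n) (Fin n) ℝ) (y : Fin m → ℝ)
    (S : Matrix (Fin n) (Fin n) ℝ) : Prop :=
  X ∈ intrinsicInterior ℝ (PrimalOpt C Cbar A b ε) ∧
    (y, S) ∈ intrinsicInterior ℝ (DualOpt C Cbar A b ε)

/-- `π(ε) = π(ε')`: the optimal partitions at `ε` and `ε'` coincide, expressed through
maximally complementary solutions (`B = range X*`, `N = range S*`, `T` being determined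
by `B` and `N`). -/
def SamePartition (C Cbar : Matrix (Fin n) (Fin n) ℝ) (A : Fin m → Matrix (Fin n) (Fin n) ℝ)
    (b : Fin m → ℝ) (ε ε' : ℝ) : Prop :=
  ∃ X y S X' y' S', MaxComp C Cbar A b ε X y S ∧ MaxComp C Cbar A b ε' X' y' S' ∧
    LinearMap.range X.mulVecLin = LinearMap.range X'.mulVecLin ∧
    LinearMap.range S.mulVecLin = LinearMap.range S'.mulVecLin

/-- The standing assumptions: symmetric data, linearly independent constraint matrices and
the interior point condition at `ε = 0`. -/
def StandingAssumptions (C Cbar : Matrix (Fin n) (Fin n) ℝ)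
    (A : Fin m → Matrix (Fin n) (Fin n) ℝ) (b : Fin m → ℝ) : Prop :=
  C.IsSymm ∧ Cbar.IsSymm ∧ (∀ i, (A i).IsSymm) ∧ LinearIndependent ℝ A ∧
    ∃ X y S, PrimalFeasible A b X ∧ X.PosDef ∧ DualFeasible C Cbar A 0 y S ∧ S.PosDef

/-- The invariancy set of `ε̄`. -/
def InvSet (C Cbar : Matrix (Fin n) (Fin n) ℝ) (A : Fin m → Matrix (Fin n) (Fin n) ℝ)
    (b : Fin m → ℝ) (εbar : ℝ) : Set ℝ :=
  {ε | ε ∈ interior (Eset C Cbar A b) ∧ SamePartition C Cbar A b ε εbar}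

/-- `dim B(ε) = dim B(ε')` and `dim N(ε) = dim N(ε')`, expressed through maximally
complementary solutions. -/
def DimsMatch (C Cbar : Matrix (Fin n) (Fin n) ℝ) (A : Fin m → Matrix (Fin n) (Fin n) ℝ)
    (b : Fin m → ℝ) (ε ε' : ℝ) : Prop :=
  ∀ X y S X' y' S', MaxComp C Cbar A b ε X y S → MaxComp C Cbar A b ε' X' y' S' →
    Module.finrank ℝ (LinearMap.range X.mulVecLin) =
        Module.finrank ℝ (LinearMap.range X'.mulVecLin) ∧
      Module.finrank ℝ (LinearMap.range S.mulVecLin) =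
        Module.finrank ℝ (LinearMap.range S'.mulVecLin)

/-- A transition point: a singleton invariancy set such that every neighborhood contains a
parameter at which `dim B` or `dim N` differs. -/
def IsTransitionPoint (C Cbar : Matrix (Fin n) (Fin n) ℝ) (A : Fin m → Matrix (Fin n) (Fin n) ℝ)
    (b : Fin m → ℝ) (εbar : ℝ) : Prop :=
  εbar ∈ interior (Eset C Cbar A b) ∧
    (∀ ε ∈ interior (Eset C Cbar A b), ε ≠ εbar → ¬ SamePartition C Cbar A b ε εbar) ∧
    ∀ ξ : ℝ, 0 < ξ → ∃ ε ∈ Set.Ioo (εbar - ξ) (εbar + ξ) ∩ interior (Eset C Cbar A b),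
      ¬ DimsMatch C Cbar A b ε εbar

/-- Existence of a strictly complementary optimal solution at `ε`. -/
def HasStrictComp (C Cbar : Matrix (Fin n) (Fin n) ℝ) (A : Fin m → Matrix (Fin n) (Fin n) ℝ)
    (b : Fin m → ℝ) (ε : ℝ) : Prop :=
  ∃ X y S, X ∈ PrimalOpt C Cbar A b ε ∧ (y, S) ∈ DualOpt C Cbar A b ε ∧ (X + S).PosDef

/-- Nonsingularity of the Jacobian `J(X, y, S)` of the optimality system, as a linear map on
`S^n × ℝ^m × S^n`: only the trivial symmetric triple is mapped to zero. -/
def JNonsingular (A : Fin m → Matrix (Fin n) (Fin n) ℝ)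
    (X S : Matrix (Fin n) (Fin n) ℝ) : Prop :=
  ∀ (DX DS : Matrix (Fin n) (Fin n) ℝ) (Dy : Fin m → ℝ), DX.IsSymm → DS.IsSymm →
    (∀ i, ((A i) * DX).trace = 0) → ((∑ i, Dy i • A i) + DS = 0) →
    (DX * S + S * DX + X * DS + DS * X = 0) → DX = 0 ∧ Dy = 0 ∧ DS = 0

/-- Primal nondegeneracy of a primal feasible `X`. -/
def PrimalNondeg (A : Fin m → Matrix (Fin n) (Fin n) ℝ)
    (X : Matrix (Fin n) (Fin n) ℝ) : Prop :=
  ∃ (r : ℕ) (M₁ : Matrix (Fin n) (Fin r) ℝ) (M₂ : Matrix (Fin n) (Fin (n - r)) ℝ),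
    M₁ᵀ * M₁ = 1 ∧ M₂ᵀ * M₂ = 1 ∧ M₁ᵀ * M₂ = 0 ∧
    LinearMap.range M₁.mulVecLin = LinearMap.range X.mulVecLin ∧
    LinearIndependent ℝ (fun i =>
      Matrix.fromBlocks (M₁ᵀ * (A i) * M₁) (M₁ᵀ * (A i) * M₂) (M₂ᵀ * (A i) * M₁) 0)

/-- Dual nondegeneracy of a dual feasible `(y, S)` (the condition involves only `S`). -/
def DualNondeg (A : Fin m → Matrix (Fin n) (Fin n) ℝ)
    (S : Matrix (Fin n) (Fin n) ℝ) : Prop :=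
  ∃ (k : ℕ) (N₁ : Matrix (Fin n) (Fin k) ℝ),
    N₁ᵀ * N₁ = 1 ∧ LinearMap.range N₁.mulVecLin = LinearMap.ker S.mulVecLin ∧
    ∀ W : Matrix (Fin k) (Fin k) ℝ, W.IsSymm →
      W ∈ Submodule.span ℝ (Set.range fun i => N₁ᵀ * (A i) * N₁)

/-- A central solution with parameter `μ` for the problems `(P_ε)` and `(D_ε)`. -/
def CentralSol (C Cbar : Matrix (Fin n) (Fin n) ℝ) (A : Fin m → Matrix (Fin n) (Fin n) ℝ)
    (b : Fin m → ℝ) (ε μ : ℝ) (X : Matrix (Fin n) (Fin n) ℝ) (y : Fin m → ℝ)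
    (S : Matrix (Fin n) (Fin n) ℝ) : Prop :=
  PrimalFeasible A b X ∧ DualFeasible C Cbar A ε y S ∧
    X * S = μ • (1 : Matrix (Fin n) (Fin n) ℝ)

/-- The Frobenius norm of a matrix. -/
def frobNorm {α β : Type*} [Fintype α] [Fintype β] (M : Matrix α β ℝ) : ℝ :=
  Real.sqrt (∑ i, ∑ j, (M i j) ^ 2)

/-- The spectral norm (induced 2-norm) of a square matrix. -/
def specNorm {N : ℕ} (M : Matrix (Fin N) (Fin N) ℝ) : ℝ :=
  ‖LinearMap.toContinuousLinearMap (Matrix.toEuclideanLin M)‖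

/-- The smallest eigenvalue of a symmetric matrix, via the Rayleigh quotient. -/
def lamMin {k : ℕ} (M : Matrix (Fin k) (Fin k) ℝ) : ℝ :=
  sInf {r : ℝ | ∃ x : Fin k → ℝ, (∑ i, (x i) ^ 2) = 1 ∧ r = x ⬝ᵥ M.mulVec x}

/-- `θ^μ`: the operator norm of the inverse of the Jacobian `J(X, y, S)` on
`S^n × ℝ^m × S^n`, characterized as the least constant `t ≥ 0` with
`‖(ΔX, Δy, ΔS)‖ ≤ t * ‖J(X,y,S)(ΔX, Δy, ΔS)‖` for all symmetric `ΔX`, `ΔS`. -/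
def thetaMu (A : Fin m → Matrix (Fin n) (Fin n) ℝ)
    (X S : Matrix (Fin n) (Fin n) ℝ) : ℝ :=
  sInf {t : ℝ | 0 ≤ t ∧ ∀ (DX DS : Matrix (Fin n) (Fin n) ℝ) (Dy : Fin m → ℝ),
    DX.IsSymm → DS.IsSymm →
    Real.sqrt (frobNorm DX ^ 2 + (∑ i, (Dy i) ^ 2) + frobNorm DS ^ 2) ≤
      t * Real.sqrt ((∑ i, (((A i) * DX).trace) ^ 2) +
        frobNorm ((∑ i, Dy i • A i) + DS) ^ 2 +
        frobNorm ((1 / 2 : ℝ) • (DX * S + S * DX + X * DS + DS * X)) ^ 2)}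

/-- A nonlinearity interval: a non-singleton open subinterval of `int(E)`, of maximal length,
on which `dim B(·)` and `dim N(·)` are constant while the optimal partition `π(·)` varies. -/
def IsNonlinearityInterval (C Cbar : Matrix (Fin n) (Fin n) ℝ)
    (A : Fin m → Matrix (Fin n) (Fin n) ℝ) (b : Fin m → ℝ) (I : Set ℝ) : Prop :=
  I ⊆ interior (Eset C Cbar A b) ∧ IsOpen I ∧ I.OrdConnected ∧
    (∃ a ∈ I, ∃ c ∈ I, a ≠ c) ∧
    (∀ ε ∈ I, ∀ ε' ∈ I, DimsMatch C Cbar A b ε ε') ∧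
    ¬ (∀ ε ∈ I, ∀ ε' ∈ I, SamePartition C Cbar A b ε ε') ∧
    ∀ I' : Set ℝ, I ⊆ I' → I' ⊆ interior (Eset C Cbar A b) → IsOpen I' → I'.OrdConnected →
      (∀ ε ∈ I', ∀ ε' ∈ I', DimsMatch C Cbar A b ε ε') → I' = I

end

/-!
A central solution `X * S = μ • 1` has duality gap `n * μ`, so both `⟨X, S*⟩` and `⟨X*, S⟩` are at
most `2 * n * μ`. Cauchy–Schwarz for the form `X` at `w` and `S v` gives
`μ • w wᵀ ≤ ⟨w, X w⟩ • S`, and pairing this with `X*` yields the Loewner bound `X* ≤ 2n • X`,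
uniformly in `μ`. Hence the central `X` stay in a compact set of feasible matrices with
`X* ≤ 2n • X`, and there `⟨X, S*⟩ = 0` forces `X` to be optimal, with `ker X* ≤ ker X` since `X*`
is in the relative interior of the optimal set, and `ker X ≤ ker X*` by the Loewner bound. So `X`
and `X*` have the same range. The eigengap, and closeness of the leading eigenspace to that range,
are open conditions at each such matrix, so by compactness they hold as soon as `⟨X, S*⟩` is small.
The dual statement follows in the same way with the roles of `X` and `S` exchanged.
-/

section

open Filter Topology
open scoped MatrixOrder

section PosSemidef

theorem isClosed_setOf_posSemidef {ι : Type*} [Finite ι] :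
    IsClosed {X : Matrix ι ι ℝ | X.PosSemidef} := by
  cases nonempty_fintype ι
  have : {X : Matrix ι ι ℝ | X.PosSemidef} =
      {X | Xᵀ = X} ∩ ⋂ w : ι → ℝ, {X | 0 ≤ w ⬝ᵥ X *ᵥ w} := by
    ext X
    simp [posSemidef_iff_dotProduct_mulVec, IsHermitian]
  rw [this]
  exact (isClosed_eq (by fun_prop) continuous_id).inter
    (isClosed_iInter fun w => isClosed_le continuous_const (by fun_prop))

variable {ι : Type*} [Fintype ι]

theorem trace_vecMulVec_self_mul (v : ι → ℝ) (M : Matrix ι ι ℝ) :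
    (vecMulVec v v * M).trace = v ⬝ᵥ M *ᵥ v := by
  rw [vecMulVec_mul, trace_vecMulVec, dotProduct_mulVec, dotProduct_comm]

theorem trace_mul_nonneg_of_posSemidef {Z R : Matrix ι ι ℝ} (hZ : Z.PosSemidef)
    (hR : R.PosSemidef) : 0 ≤ (Z * R).trace := by
  classical
  obtain ⟨k, v, rfl⟩ := posSemidef_iff_eq_sum_vecMulVec.1 hZ
  simp only [Finset.sum_mul, trace_sum, star_trivial, trace_vecMulVec_self_mul]
  exact Finset.sum_nonneg fun i _ => by simpa using hR.dotProduct_mulVec_nonneg (v i)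

theorem trace_mul_le_trace_mul_of_posSemidef {Z P R : Matrix ι ι ℝ} (hZ : Z.PosSemidef)
    (hPR : P ≤ R) : (Z * P).trace ≤ (Z * R).trace := by
  have h := trace_mul_nonneg_of_posSemidef hZ (Matrix.le_iff.1 hPR)
  rwa [mul_sub, trace_sub, sub_nonneg] at h

theorem trace_le_trace_of_le {X Y : Matrix ι ι ℝ} (h : X ≤ Y) : X.trace ≤ Y.trace := by
  simpa using (Matrix.le_iff.1 h).trace_nonneg

theorem sq_dotProduct_mulVec_le {X : Matrix ι ι ℝ} (hX : X.PosSemidef) (v w : ι → ℝ) :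
    (v ⬝ᵥ X *ᵥ w) ^ 2 ≤ (v ⬝ᵥ X *ᵥ v) * (w ⬝ᵥ X *ᵥ w) := by
  classical
  have hnonneg (x : ι → ℝ) : 0 ≤ toBilin' X x x := by
    simpa [toBilin'_apply'] using hX.dotProduct_mulVec_nonneg x
  have hsymm : LinearMap.IsSymm (toBilin' X) :=
    ⟨fun x y => by
      have hXt : Xᵀ = X := hX.isHermitian
      rw [toBilin'_apply', toBilin'_apply', RingHom.id_apply, dotProduct_mulVec,
        ← mulVec_transpose, hXt, dotProduct_comm]⟩
  simpa [toBilin'_apply'] using (toBilin' X).apply_sq_le_of_symm hnonneg hsymm v w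

theorem le_of_forall_dotProduct_mulVec_le {P R : Matrix ι ι ℝ} (hP : P.IsHermitian)
    (hR : R.IsHermitian) (h : ∀ v, v ⬝ᵥ P *ᵥ v ≤ v ⬝ᵥ R *ᵥ v) : P ≤ R :=
  Matrix.le_iff.2 <| .of_dotProduct_mulVec_nonneg (hR.sub hP) fun v => by
    simpa [sub_mulVec, dotProduct_sub] using h v

theorem smul_vecMulVec_self_le [DecidableEq ι] {X S : Matrix ι ι ℝ} {μ : ℝ} (hX : X.PosSemidef)
    (hS : S.PosSemidef) (hμ : 0 < μ) (hXS : X * S = μ • 1) (w : ι → ℝ) :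
    μ • vecMulVec w w ≤ (w ⬝ᵥ X *ᵥ w) • S := by
  have hXw : 0 ≤ w ⬝ᵥ X *ᵥ w := by simpa using hX.dotProduct_mulVec_nonneg w
  have hw : (vecMulVec w w).PosSemidef := by simpa using posSemidef_vecMulVec_self_star w
  refine le_of_forall_dotProduct_mulVec_le (hw.smul hμ.le).isHermitian (hS.smul hXw).isHermitian
    fun v => ?_
  have hcs : (μ * (w ⬝ᵥ v)) ^ 2 ≤ (w ⬝ᵥ X *ᵥ w) * (μ * (v ⬝ᵥ S *ᵥ v)) := by
    simpa [mulVec_mulVec, hXS, smul_mulVec, dotProduct_comm (S *ᵥ v)] using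
      sq_dotProduct_mulVec_le hX w (S *ᵥ v)
  have hle : μ * (w ⬝ᵥ v) ^ 2 ≤ (w ⬝ᵥ X *ᵥ w) * (v ⬝ᵥ S *ᵥ v) :=
    le_of_mul_le_mul_left (by linarith) hμ
  simpa [smul_mulVec, vecMulVec_mulVec, dotProduct_comm v w, sq] using hle

theorem le_smul_of_mul_eq_smul_one [DecidableEq ι] {X S Z : Matrix ι ι ℝ} {μ c : ℝ}
    (hX : X.PosSemidef) (hS : S.PosSemidef) (hZ : Z.PosSemidef) (hμ : 0 < μ) (hXS : X * S = μ • 1)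
    (hZS : (Z * S).trace ≤ c * μ) : Z ≤ c • X := by
  have hZX (w : ι → ℝ) : w ⬝ᵥ Z *ᵥ w ≤ c * (w ⬝ᵥ X *ᵥ w) := by
    have hXw : 0 ≤ w ⬝ᵥ X *ᵥ w := by simpa using hX.dotProduct_mulVec_nonneg w
    have htr := trace_mul_le_trace_mul_of_posSemidef hZ (smul_vecMulVec_self_le hX hS hμ hXS w)
    rw [Matrix.mul_smul, Matrix.mul_smul, trace_smul, trace_smul, trace_mul_comm Z,
      trace_vecMulVec_self_mul, smul_eq_mul, smul_eq_mul] at htr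
    refine le_of_mul_le_mul_left ?_ hμ
    calc μ * (w ⬝ᵥ Z *ᵥ w) ≤ (w ⬝ᵥ X *ᵥ w) * (Z * S).trace := htr
      _ ≤ (w ⬝ᵥ X *ᵥ w) * (c * μ) := mul_le_mul_of_nonneg_left hZS hXw
      _ = μ * (c * (w ⬝ᵥ X *ᵥ w)) := by ring
  refine le_of_forall_dotProduct_mulVec_le hZ.isHermitian ?_ fun w => ?_
  · exact hX.isHermitian.smul (IsSelfAdjoint.all c)
  · simpa [smul_mulVec] using hZX w

theorem abs_apply_le_trace {X : Matrix ι ι ℝ} (hX : X.PosSemidef) (i j : ι) :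
    |X i j| ≤ X.trace := by
  classical
  have hdiag (k : ι) : X k k ≤ X.trace :=
    Finset.single_le_sum (f := fun k => X k k) (fun _ _ => hX.diag_nonneg) (Finset.mem_univ k)
  refine abs_le_of_sq_le_sq ?_ hX.trace_nonneg
  calc X i j ^ 2 ≤ X i i * X j j := by
        simpa using sq_dotProduct_mulVec_le hX (Pi.single i 1) (Pi.single j 1)
    _ ≤ X.trace ^ 2 := by
        rw [sq]
        exact mul_le_mul (hdiag i) (hdiag j) hX.diag_nonneg hX.trace_nonneg

theorem isCompact_setOf_posSemidef_trace_mul_le {P : Matrix ι ι ℝ} (hP : P.PosDef) (κ : ℝ) :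
    IsCompact {X : Matrix ι ι ℝ | X.PosSemidef ∧ (X * P).trace ≤ κ} := by
  classical
  have hPinv : P⁻¹ * P = (1 : ℝ) • 1 := by
    rw [one_smul, nonsing_inv_mul _ ((isUnit_iff_isUnit_det P).1 hP.isUnit)]
  have hbound : IsCompact (univ.pi fun _ : ι => univ.pi fun _ : ι =>
      Icc (-(κ * P⁻¹.trace)) (κ * P⁻¹.trace)) :=
    isCompact_univ_pi fun _ => isCompact_univ_pi fun _ => isCompact_Icc
  have hclosed : IsClosed {X : Matrix ι ι ℝ | (X * P).trace ≤ κ} :=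
    isClosed_le (continuous_id.matrix_mul continuous_const).matrix_trace continuous_const
  refine hbound.of_isClosed_subset (isClosed_setOf_posSemidef.inter hclosed) ?_
  rintro (X : Matrix ι ι ℝ) ⟨hX, hXP⟩ i - j -
  have hle : X ≤ κ • P⁻¹ :=
    le_smul_of_mul_eq_smul_one hP.inv.posSemidef hP.posSemidef hX one_pos hPinv (by simpa using hXP)
  exact abs_le.1 ((abs_apply_le_trace hX i j).trans
    (by simpa using trace_le_trace_of_le hle))

theorem isCompact_setOf_transpose_mul_self_eq_one [DecidableEq ι] :
    IsCompact {Q : Matrix ι ι ℝ | Qᵀ * Q = 1} := by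
  have hbound : IsCompact (univ.pi fun _ : ι => univ.pi fun _ : ι => Icc (-1 : ℝ) 1) :=
    isCompact_univ_pi fun _ => isCompact_univ_pi fun _ => isCompact_Icc
  refine hbound.of_isClosed_subset (isClosed_eq (by fun_prop) continuous_const) ?_
  intro Q hQ i _ j _
  exact abs_le.1 (entry_norm_bound_of_unitary
    (mem_unitaryGroup_iff'.2 hQ) i j)

end PosSemidef

section RangeKernel

variable {ι κ : Type*} [Fintype ι]

theorem mul_transpose_eq_of_range_le {R : Type*} [CommRing R] [Fintype κ] [DecidableEq κ]
    {U V : Matrix ι κ R} (hU : Uᵀ * U = 1) (hV : Vᵀ * V = 1)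
    (h : LinearMap.range V.mulVecLin ≤ LinearMap.range U.mulVecLin) : V * Vᵀ = U * Uᵀ := by
  choose M hM using fun j => h (LinearMap.mem_range_self V.mulVecLin (Pi.single j 1))
  have hVU : V = U * (of M)ᵀ := by
    ext i j
    have hVj : U *ᵥ M j = V *ᵥ Pi.single j 1 := hM j
    rw [mulVec_single_one] at hVj
    exact (congrFun hVj i).symm
  generalize (of M)ᵀ = N at hVU
  have hN : N * Nᵀ = 1 := by
    rw [mul_eq_one_comm, ← hV, hVU, transpose_mul, Matrix.mul_assoc, ← Matrix.mul_assoc Uᵀ, hU,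
      Matrix.one_mul]
  rw [hVU, transpose_mul, Matrix.mul_assoc, ← Matrix.mul_assoc N, hN, Matrix.one_mul]

theorem ker_mulVecLin_le_of_le_smul {X Z : Matrix ι ι ℝ} {c : ℝ} (hZ : Z.PosSemidef)
    (h : Z ≤ c • X) : LinearMap.ker X.mulVecLin ≤ LinearMap.ker Z.mulVecLin := by
  intro w (hw : X *ᵥ w = 0)
  have hle : w ⬝ᵥ Z *ᵥ w ≤ 0 := by
    simpa [sub_mulVec, smul_mulVec, hw] using (Matrix.le_iff.1 h).dotProduct_mulVec_nonneg w
  have hge : 0 ≤ w ⬝ᵥ Z *ᵥ w := by simpa using hZ.dotProduct_mulVec_nonneg w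
  exact (hZ.dotProduct_mulVec_zero_iff w).1 (by simpa using le_antisymm hle hge)

theorem ker_mulVecLin_le_of_posSemidef_add_smul_sub {X Z : Matrix ι ι ℝ} {t : ℝ}
    (hZ : Z.PosSemidef) (ht : 0 < t) (h : (X + t • (X - Z)).PosSemidef) :
    LinearMap.ker X.mulVecLin ≤ LinearMap.ker Z.mulVecLin := by
  have hsub : (1 + t) • X - t • Z = X + t • (X - Z) := by module
  have hsmul : t • Z ≤ (1 + t) • X := by rwa [Matrix.le_iff, hsub]
  intro w hw
  have hw' := ker_mulVecLin_le_of_le_smul (hZ.smul ht.le) hsmul hw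
  simpa [smul_mulVec, ht.ne'] using hw'

theorem range_mulVecLin_le_of_ker_le {K : Type*} [Field K] {X Z : Matrix ι ι K} (hX : X.IsSymm)
    (hZ : Z.IsSymm) (h : LinearMap.ker X.mulVecLin ≤ LinearMap.ker Z.mulVecLin) :
    LinearMap.range Z.mulVecLin ≤ LinearMap.range X.mulVecLin := by
  classical
  rintro _ ⟨v, rfl⟩
  by_contra hv
  obtain ⟨f, hf, hfX⟩ := Submodule.exists_le_ker_of_notMem hv
  obtain ⟨w, rfl⟩ := (dotProductEquiv K ι).surjective f
  have hXw : X *ᵥ w = 0 := by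
    refine dotProduct_eq_zero _ fun u => ?_
    have hu : w ⬝ᵥ X *ᵥ u = 0 := hfX (LinearMap.mem_range_self X.mulVecLin u)
    rwa [dotProduct_mulVec, ← mulVec_transpose, hX.eq] at hu
  have hZw : Z *ᵥ w = 0 := h hXw
  apply hf
  change w ⬝ᵥ Z *ᵥ v = 0
  rw [dotProduct_mulVec, ← mulVec_transpose, hZ.eq, hZw, zero_dotProduct]

theorem range_mulVecLin_eq_of_ker_eq {K : Type*} [Field K] {X Z : Matrix ι ι K} (hX : X.IsSymm)
    (hZ : Z.IsSymm) (h : LinearMap.ker X.mulVecLin = LinearMap.ker Z.mulVecLin) :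
    LinearMap.range X.mulVecLin = LinearMap.range Z.mulVecLin :=
  le_antisymm (range_mulVecLin_le_of_ker_le hZ hX h.ge) (range_mulVecLin_le_of_ker_le hX hZ h.le)

end RangeKernel

section LeadingEigenspace

variable {n r : ℕ} {X Q : Matrix (Fin n) (Fin n) ℝ} {φ : Fin n → ℝ}

/-- The first `r` columns of a square matrix: for the eigenvector matrix of a diagonalization
with decreasing eigenvalues, an orthonormal basis of the leading `r`-dimensional eigenspace. -/
def leadingColumns (hr : r ≤ n) (Q : Matrix (Fin n) (Fin n) ℝ) : Matrix (Fin n) (Fin r) ℝ :=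
  Q.submatrix id (Fin.castLE hr)

/-- `X` has a gap between its `r`-th and `(r+1)`-th largest eigenvalues. Eigenvalues are read off
from every orthogonal diagonalization of `X` with decreasing diagonal. -/
def HasLeadingEigengap (r : ℕ) (X : Matrix (Fin n) (Fin n) ℝ) : Prop :=
  ∀ (φ : Fin n → ℝ) (Q : Matrix (Fin n) (Fin n) ℝ), Antitone φ → Qᵀ * Q = 1 →
    X * Q = Q * diagonal φ → ∀ i j : Fin n, (i : ℕ) < r → r ≤ (j : ℕ) → φ j < φ i

/-- The span of eigenvectors to the `r` largest eigenvalues of `X` is within distance `η` of the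
column space of `V`, a matrix with orthonormal columns. The span is not unique when there is no
eigengap, so the bound is required for every choice of eigenvectors. -/
def LeadingEigenspaceWithin (hr : r ≤ n) (V : Matrix (Fin n) (Fin r) ℝ) (η : ℝ)
    (X : Matrix (Fin n) (Fin n) ℝ) : Prop :=
  ∀ (φ : Fin n → ℝ) (Q : Matrix (Fin n) (Fin n) ℝ), Antitone φ → Qᵀ * Q = 1 →
    X * Q = Q * diagonal φ →
      specNorm (leadingColumns hr Q * (leadingColumns hr Q)ᵀ - V * Vᵀ) < η

theorem leadingColumns_transpose_mul_self (hr : r ≤ n) (hQ : Qᵀ * Q = 1) :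
    (leadingColumns hr Q)ᵀ * leadingColumns hr Q = 1 := by
  rw [leadingColumns, transpose_submatrix, ← submatrix_mul _ _ _ _ _ Function.bijective_id, hQ,
    submatrix_one _ (Fin.castLE_injective hr)]

theorem diagonal_eq_transpose_mul_mul (hQ : Qᵀ * Q = 1) (hX : X * Q = Q * diagonal φ) :
    diagonal φ = Qᵀ * X * Q := by
  rw [Matrix.mul_assoc, hX, ← Matrix.mul_assoc, hQ, Matrix.one_mul]

theorem eigenvalue_nonneg (hXpsd : X.PosSemidef) (hQ : Qᵀ * Q = 1) (hX : X * Q = Q * diagonal φ)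
    (i : Fin n) : 0 ≤ φ i := by
  have hpsd : (diagonal φ).PosSemidef :=
    diagonal_eq_transpose_mul_mul hQ hX ▸ hXpsd.conjTranspose_mul_mul_same Q
  simpa using hpsd.diag_nonneg (i := i)

theorem eigenvalue_pos_iff_lt_rank (hXpsd : X.PosSemidef) (hφ : Antitone φ) (hQ : Qᵀ * Q = 1)
    (hX : X * Q = Q * diagonal φ) (i : Fin n) : 0 < φ i ↔ (i : ℕ) < X.rank := by
  have hdiag := diagonal_eq_transpose_mul_mul hQ hX
  have hdet : IsUnit Q.det := isUnit_det_of_left_inverse hQ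
  have hrank : (diagonal φ).rank = X.rank := by
    rw [hdiag, rank_mul_eq_left_of_isUnit_det _ _ hdet,
      rank_mul_eq_right_of_isUnit_det _ _ (by rwa [det_transpose])]
  have hcard : Finset.card {j | 0 < φ j} = X.rank := by
    rw [← hrank, rank_diagonal, Fintype.card_subtype]
    simp only [(eigenvalue_nonneg hXpsd hQ hX _).lt_iff_ne']
  rw [← hcard, Tuple.lt_card_gt_iff_apply_gt_of_antitone hφ]

theorem eq_leadingColumns_mul_of_eigenvalue_eq_zero (hr : r ≤ n) (hQ : Qᵀ * Q = 1)
    (hX : X * Q = Q * diagonal φ) (hzero : ∀ i : Fin n, r ≤ (i : ℕ) → φ i = 0) :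
    X = leadingColumns hr Q * (diagonal (φ ∘ Fin.castLE hr) * (leadingColumns hr Q)ᵀ) := by
  have hspec : X = Q * (diagonal φ * Qᵀ) := by
    rw [← Matrix.mul_assoc, ← hX, Matrix.mul_assoc, mul_eq_one_comm.1 hQ, Matrix.mul_one]
  ext i j
  calc X i j = ∑ k, Q i k * (φ k * Q j k) := by
        conv_lhs => rw [hspec]
        simp only [mul_apply (M := Q), diagonal_mul, transpose_apply]
    _ = ∑ k, Q i (Fin.castLE hr k) * (φ (Fin.castLE hr k) * Q j (Fin.castLE hr k)) := by
        refine (Fintype.sum_of_injective _ (Fin.castLE_injective hr) _ _ (fun k hk => ?_)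
          fun _ => rfl).symm
        have hrk : r ≤ (k : ℕ) := not_lt.1 fun hlt => hk ⟨⟨k, hlt⟩, rfl⟩
        rw [hzero k hrk, zero_mul, mul_zero]
    _ = _ := by
        rw [mul_apply]
        simp [leadingColumns]

theorem rank_eq_of_transpose_mul_self_eq_one {V : Matrix (Fin n) (Fin r) ℝ} (hV : Vᵀ * V = 1)
    (hVX : LinearMap.range V.mulVecLin = LinearMap.range X.mulVecLin) : X.rank = r := by
  rw [Matrix.rank, ← hVX, ← Matrix.rank, ← rank_transpose_mul_self, hV, rank_one, Fintype.card_fin]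

theorem leadingColumns_mul_transpose_eq (hr : r ≤ n) {V : Matrix (Fin n) (Fin r) ℝ}
    (hXpsd : X.PosSemidef) (hV : Vᵀ * V = 1)
    (hVX : LinearMap.range V.mulVecLin = LinearMap.range X.mulVecLin) (hφ : Antitone φ)
    (hQ : Qᵀ * Q = 1) (hX : X * Q = Q * diagonal φ) :
    leadingColumns hr Q * (leadingColumns hr Q)ᵀ = V * Vᵀ := by
  have hzero (i : Fin n) (hi : r ≤ (i : ℕ)) : φ i = 0 := by
    rw [← rank_eq_of_transpose_mul_self_eq_one hV hVX] at hi
    exact le_antisymm (not_lt.1 fun hpos =>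
      hi.not_gt ((eigenvalue_pos_iff_lt_rank hXpsd hφ hQ hX i).1 hpos))
      (eigenvalue_nonneg hXpsd hQ hX i)
  have hfac := eq_leadingColumns_mul_of_eigenvalue_eq_zero hr hQ hX hzero
  refine (mul_transpose_eq_of_range_le (leadingColumns_transpose_mul_self hr hQ) hV ?_).symm
  rw [hVX, hfac, mulVecLin_mul]
  exact LinearMap.range_comp_le_range _ _

end LeadingEigenspace

section Openness

variable {n r : ℕ} {X : Matrix (Fin n) (Fin n) ℝ}

theorem continuous_specNorm : Continuous (specNorm : Matrix (Fin n) (Fin n) ℝ → ℝ) := by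
  have hlin : Continuous ((LinearMap.toContinuousLinearMap (𝕜 := ℝ) (E := EuclideanSpace ℝ (Fin n))
      (F' := EuclideanSpace ℝ (Fin n))).toLinearMap ∘ₗ (toEuclideanLin (𝕜 := ℝ)).toLinearMap) :=
    LinearMap.continuous_of_finiteDimensional _
  exact hlin.norm

-- The eigenvalues `diag (Qᵀ * Y * Q)` depend continuously on `(Y, Q)`, the matrices `Q` form a
-- compact set, and diagonalizing with decreasing diagonal is a closed condition on `(Y, Q)`.
theorem eventually_forall_diagonalization {p : (Fin n → ℝ) → Matrix (Fin n) (Fin n) ℝ → Prop}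
    (hp : ∀ (φ : Fin n → ℝ) (Q : Matrix (Fin n) (Fin n) ℝ), Antitone φ → Qᵀ * Q = 1 →
      X * Q = Q * diagonal φ → ∀ᶠ z in 𝓝 (φ, Q), p z.1 z.2) :
    ∀ᶠ Y in 𝓝 X, ∀ (φ : Fin n → ℝ) (Q : Matrix (Fin n) (Fin n) ℝ), Antitone φ →
      Qᵀ * Q = 1 → Y * Q = Q * diagonal φ → p φ Q := by
  let eig (Y Q : Matrix (Fin n) (Fin n) ℝ) : Fin n → ℝ := diag (Qᵀ * Y * Q)
  have heig {φ : Fin n → ℝ} {Y Q : Matrix (Fin n) (Fin n) ℝ} (hQ : Qᵀ * Q = 1)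
      (hY : Y * Q = Q * diagonal φ) : eig Y Q = φ := by
    simp only [eig, ← diagonal_eq_transpose_mul_mul hQ hY, diag_diagonal]
  have hcont : Continuous fun z : Matrix (Fin n) (Fin n) ℝ × Matrix (Fin n) (Fin n) ℝ =>
      eig z.1 z.2 := by
    fun_prop
  let good (Y Q : Matrix (Fin n) (Fin n) ℝ) : Prop :=
    Antitone (eig Y Q) → Y * Q = Q * diagonal (eig Y Q) → p (eig Y Q) Q
  have hlocal (Q : Matrix (Fin n) (Fin n) ℝ) (hQ : Qᵀ * Q = 1) :
      ∀ᶠ z in 𝓝 (X, Q), good z.1 z.2 := by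
    by_cases hdiag : Antitone (eig X Q) ∧ X * Q = Q * diagonal (eig X Q)
    · have hev := hp _ Q hdiag.1 hQ hdiag.2
      filter_upwards [(hcont.prodMk continuous_snd).continuousAt.eventually hev] with z hz _ _
      exact hz
    · have hclosed : IsClosed {z : Matrix (Fin n) (Fin n) ℝ × Matrix (Fin n) (Fin n) ℝ |
          Antitone (eig z.1 z.2) ∧ z.1 * z.2 = z.2 * diagonal (eig z.1 z.2)} :=
        (isClosed_antitone.preimage hcont).inter (isClosed_eq (by fun_prop) (by fun_prop))
      filter_upwards [hclosed.isOpen_compl.mem_nhds hdiag] with z hz hanti hmul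
      exact (hz ⟨hanti, hmul⟩).elim
  filter_upwards [isCompact_setOf_transpose_mul_self_eq_one.eventually_forall_of_forall_eventually
    (P := good) hlocal] with Y hY φ Q hφ hQ hYQ
  obtain rfl := heig hQ hYQ
  exact hY Q hQ hφ hYQ

theorem eventually_hasLeadingEigengap {V : Matrix (Fin n) (Fin r) ℝ} (hX : X.PosSemidef)
    (hV : Vᵀ * V = 1) (hVX : LinearMap.range V.mulVecLin = LinearMap.range X.mulVecLin) :
    ∀ᶠ Y in 𝓝 X, HasLeadingEigengap r Y := by
  refine eventually_forall_diagonalization fun φ Q hφ hQ hXQ => ?_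
  have hrank := rank_eq_of_transpose_mul_self_eq_one hV hVX
  have hpos := hrank ▸ eigenvalue_pos_iff_lt_rank hX hφ hQ hXQ
  simp only [Filter.eventually_all]
  intro i j hi hj
  have hlt : φ j < φ i := (not_lt.1 fun h => hj.not_gt ((hpos j).1 h)).trans_lt ((hpos i).2 hi)
  have hcont (k : Fin n) : Continuous fun z : (Fin n → ℝ) × Matrix (Fin n) (Fin n) ℝ => z.1 k := by
    fun_prop
  exact (hcont j).continuousAt.eventually_lt (hcont i).continuousAt hlt

theorem eventually_leadingEigenspaceWithin (hr : r ≤ n) {V : Matrix (Fin n) (Fin r) ℝ} {η : ℝ}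
    (hX : X.PosSemidef) (hV : Vᵀ * V = 1)
    (hVX : LinearMap.range V.mulVecLin = LinearMap.range X.mulVecLin) (hη : 0 < η) :
    ∀ᶠ Y in 𝓝 X, LeadingEigenspaceWithin hr V η Y := by
  refine eventually_forall_diagonalization fun φ Q hφ hQ hXQ => ?_
  have hzero : specNorm (leadingColumns hr Q * (leadingColumns hr Q)ᵀ - V * Vᵀ) < η := by
    rw [leadingColumns_mul_transpose_eq hr hX hV hVX hφ hQ hXQ, sub_self]
    simpa [specNorm] using hη
  have hcont : Continuous fun z : (Fin n → ℝ) × Matrix (Fin n) (Fin n) ℝ =>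
      specNorm (leadingColumns hr z.2 * (leadingColumns hr z.2)ᵀ - V * Vᵀ) := by
    have hL : Continuous fun z : (Fin n → ℝ) × Matrix (Fin n) (Fin n) ℝ => leadingColumns hr z.2 :=
      continuous_snd.matrix_submatrix _ _
    exact continuous_specNorm.comp ((hL.matrix_mul hL.matrix_transpose).sub continuous_const)
  exact hcont.continuousAt.eventually_lt continuousAt_const hzero

end Openness

section Compactness

theorem exists_pos_forall_lt_of_eventually {α : Type*} [TopologicalSpace α] {K : Set α}
    {f : α → ℝ} {p : α → Prop} (hK : IsCompact K) (hf : ContinuousOn f K)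
    (h : ∀ x ∈ K, f x ≤ 0 → ∀ᶠ y in 𝓝 x, p y) :
    ∃ δ, 0 < δ ∧ ∀ x ∈ K, f x < δ → p x := by
  have hpos : ∀ x ∈ K \ interior {y | p y}, 0 < f x := fun x hx =>
    not_le.1 fun hle => hx.2 (mem_interior_iff_mem_nhds.2 (h x hx.1 hle))
  obtain ⟨δ, hδ, hle⟩ :=
    (hK.diff isOpen_interior).exists_forall_le' (hf.mono sdiff_subset) hpos
  exact ⟨δ, hδ, fun x hx hlt =>
    by_contra fun hp => (hle x ⟨hx, fun hmem => hp (interior_subset hmem)⟩).not_gt hlt⟩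

variable {ι : Type*} [Fintype ι] {F : Set (Matrix ι ι ℝ)} {P W Z : Matrix ι ι ℝ}
  {κ c : ℝ} {p : Matrix ι ι ℝ → Prop}

theorem exists_pos_forall_of_trace_mul_lt (hF : IsClosed F) (hFpsd : ∀ X ∈ F, X.PosSemidef)
    (hP : P.PosDef) (hZ : Z.PosSemidef)
    (hker : ∀ X ∈ F, (X * W).trace ≤ 0 → LinearMap.ker Z.mulVecLin ≤ LinearMap.ker X.mulVecLin)
    (hp : ∀ X : Matrix ι ι ℝ, X.PosSemidef →
      LinearMap.range X.mulVecLin = LinearMap.range Z.mulVecLin → ∀ᶠ Y in 𝓝 X, p Y) :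
    ∃ δ, 0 < δ ∧ ∀ X ∈ F, (X * P).trace ≤ κ → Z ≤ c • X → (X * W).trace < δ → p X := by
  have hclosed : IsClosed {X : Matrix ι ι ℝ | Z ≤ c • X} := by
    simp only [Matrix.le_iff]
    exact isClosed_setOf_posSemidef.preimage
      (f := fun X : Matrix ι ι ℝ => c • X - Z) (by fun_prop)
  have hK := (isCompact_setOf_posSemidef_trace_mul_le hP κ).inter_right (hF.inter hclosed)
  have htr : Continuous fun X : Matrix ι ι ℝ => (X * W).trace :=
    (continuous_id.matrix_mul continuous_const).matrix_trace
  obtain ⟨δ, hδ, hδp⟩ := exists_pos_forall_lt_of_eventually (p := p) hK htr.continuousOn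
    fun X ⟨⟨hXpsd, _⟩, hX, hXZ⟩ hXW => hp X hXpsd <|
      range_mulVecLin_eq_of_ker_eq hXpsd.isHermitian hZ.isHermitian <|
        le_antisymm (ker_mulVecLin_le_of_le_smul hZ hXZ) (hker X hX hXW)
  exact ⟨δ, hδ, fun X hX hXP hXZ hXW => hδp X ⟨⟨hFpsd X hX, hXP⟩, hX, hXZ⟩ hXW⟩

theorem exists_pos_forall_of_mul_eq_smul_one [DecidableEq ι] (hF : IsClosed F)
    (hFpsd : ∀ X ∈ F, X.PosSemidef) (hP : P.PosDef) (hZ : Z.PosSemidef)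
    (hker : ∀ X ∈ F, (X * W).trace ≤ 0 → LinearMap.ker Z.mulVecLin ≤ LinearMap.ker X.mulVecLin)
    (hp : ∀ X : Matrix ι ι ℝ, X.PosSemidef →
      LinearMap.range X.mulVecLin = LinearMap.range Z.mulVecLin → ∀ᶠ Y in 𝓝 X, p Y)
    (hc : 0 ≤ c) :
    ∃ μ₀, 0 < μ₀ ∧ ∀ μ, 0 < μ → μ < μ₀ → ∀ X ∈ F, ∀ S : Matrix ι ι ℝ, S.PosSemidef →
      X * S = μ • 1 → (X * P).trace ≤ κ + c * μ → (X * W).trace ≤ c * μ →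
      (Z * S).trace ≤ c * μ → p X := by
  obtain ⟨δ, hδ, hδp⟩ :=
    exists_pos_forall_of_trace_mul_lt (κ := κ + c) (c := c) hF hFpsd hP hZ hker hp
  refine ⟨min 1 (δ / (c + 1)), by positivity, ?_⟩
  intro μ hμ hμ₀ X hX S hS hXS hXP hXW hZS
  have hμ₁ : c * μ ≤ c := mul_le_of_le_one_right hc (hμ₀.trans_le (min_le_left _ _)).le
  have hμδ : μ * (c + 1) < δ :=
    (lt_div_iff₀ (by positivity)).1 (hμ₀.trans_le (min_le_right _ _))
  exact hδp X hX (hXP.trans (by linarith))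
    (le_smul_of_mul_eq_smul_one (hFpsd X hX) hS hZ hμ hXS hZS) (hXW.trans_lt (by linarith))

end Compactness

theorem exists_pos_add_smul_sub_mem {E : Type*} [AddCommGroup E] [Module ℝ E] [TopologicalSpace E]
    [IsTopologicalAddGroup E] [ContinuousSMul ℝ E] {s : Set E} {x z : E}
    (hx : x ∈ intrinsicInterior ℝ s) (hz : z ∈ s) :
    ∃ t : ℝ, 0 < t ∧ x + t • (x - z) ∈ s := by
  obtain ⟨y, hy, rfl⟩ := mem_intrinsicInterior.1 hx
  let f (t : ℝ) : affineSpan ℝ s :=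
    ⟨AffineMap.lineMap (y : E) z (-t), AffineMap.lineMap_mem _ y.2 (subset_affineSpan ℝ s hz)⟩
  have hf_coe (t : ℝ) : (f t : E) = y + t • ((y : E) - z) := by
    simp only [f, AffineMap.lineMap_apply_module]
    module
  have hf : Continuous f := by
    refine continuous_induced_rng.2 ?_
    simp only [Function.comp_def, hf_coe]
    fun_prop
  have hf0 : f 0 = y := by
    ext
    simp [hf_coe]
  have hev : ∀ᶠ t in 𝓝 (0 : ℝ), (f t : E) ∈ s :=
    hf.continuousAt.eventually (hf0.symm ▸ mem_interior_iff_mem_nhds.1 hy)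
  obtain ⟨t, hts, ht⟩ :=
    ((hev.filter_mono nhdsWithin_le_nhds).and (self_mem_nhdsWithin (s := Ioi (0 : ℝ)))).exists
  exact ⟨t, ht, hf_coe t ▸ hts⟩

section CentralPath

variable {n m : ℕ} {C Cbar : Matrix (Fin n) (Fin n) ℝ} {A : Fin m → Matrix (Fin n) (Fin n) ℝ}
  {b : Fin m → ℝ} {ε μ : ℝ} {X X' S S' : Matrix (Fin n) (Fin n) ℝ} {y y' : Fin m → ℝ}

theorem isClosed_setOf_primalFeasible : IsClosed {X | PrimalFeasible A b X} := by
  have hconstr : IsClosed {X : Matrix (Fin n) (Fin n) ℝ | ∀ i, (A i * X).trace = b i} := by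
    simp only [ofPred_forall]
    exact isClosed_iInter fun i =>
      isClosed_eq (continuous_const.matrix_mul continuous_id).matrix_trace continuous_const
  exact (isClosed_eq continuous_id.matrix_transpose continuous_id).inter
    (hconstr.inter isClosed_setOf_posSemidef)

theorem isClosed_setOf_exists_dualFeasible :
    IsClosed {S | ∃ y, DualFeasible C Cbar A ε y S} := by
  have hset : {S | ∃ y, DualFeasible C Cbar A ε y S} =
      {S | C + ε • Cbar - S ∈ Submodule.span ℝ (range A)} ∩ {S | S.PosSemidef} := by
    ext S
    simp only [Submodule.mem_span_range_iff_exists_fun, mem_inter_iff, mem_ofPred_eq]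
    exact ⟨fun ⟨y, _, hy, hS⟩ => ⟨⟨y, eq_sub_of_add_eq hy⟩, hS⟩,
      fun ⟨⟨y, hy⟩, hS⟩ => ⟨y, hS.isHermitian, add_eq_of_eq_sub hy, hS⟩⟩
  rw [hset]
  exact ((Submodule.closed_of_finiteDimensional _).preimage (by fun_prop)).inter
    isClosed_setOf_posSemidef

theorem trace_mul_eq_dualityGap (hX : PrimalFeasible A b X)
    (hS : DualFeasible C Cbar A ε y S) :
    (X * S).trace = ((C + ε • Cbar) * X).trace - ∑ i, b i * y i := by
  have hconstr (i : Fin m) : (y i • A i * X).trace = b i * y i := by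
    rw [smul_mul, trace_smul, hX.2.1 i, smul_eq_mul, mul_comm]
  rw [← hS.2.1, Matrix.add_mul, trace_add, Finset.sum_mul, trace_sum, trace_mul_comm X S]
  simp only [hconstr, add_sub_cancel_left]

theorem trace_mul_add_trace_mul_eq (hX : PrimalFeasible A b X) (hX' : PrimalFeasible A b X')
    (hS : DualFeasible C Cbar A ε y S) (hS' : DualFeasible C Cbar A ε y' S') :
    (X * S').trace + (X' * S).trace = (X * S).trace + (X' * S').trace := by
  simp only [trace_mul_eq_dualityGap hX hS, trace_mul_eq_dualityGap hX hS',
    trace_mul_eq_dualityGap hX' hS, trace_mul_eq_dualityGap hX' hS']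
  ring

theorem trace_mul_nonneg_of_feasible (hX : PrimalFeasible A b X)
    (hS : DualFeasible C Cbar A ε y S) : 0 ≤ (X * S).trace :=
  trace_mul_nonneg_of_posSemidef hX.2.2 hS.2.2

theorem trace_mul_le_trace_mul_of_opt (hX' : X' ∈ PrimalOpt C Cbar A b ε)
    (hS' : (y', S') ∈ DualOpt C Cbar A b ε) (hX : PrimalFeasible A b X)
    (hS : DualFeasible C Cbar A ε y S) : (X' * S').trace ≤ (X * S).trace := by
  rw [trace_mul_eq_dualityGap hX hS, trace_mul_eq_dualityGap hX'.1 hS'.1]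
  exact sub_le_sub (hX'.2 X hX) (hS'.2 y S hS)

theorem mem_primalOpt_of_trace_mul_nonpos (hX : PrimalFeasible A b X)
    (hS : DualFeasible C Cbar A ε y S) (h : (X * S).trace ≤ 0) : X ∈ PrimalOpt C Cbar A b ε := by
  refine ⟨hX, fun X' hX' => ?_⟩
  have hgap' := trace_mul_nonneg_of_feasible hX' hS
  rw [trace_mul_eq_dualityGap hX hS] at h
  rw [trace_mul_eq_dualityGap hX' hS] at hgap'
  linarith

theorem mem_dualOpt_of_trace_mul_nonpos (hX : PrimalFeasible A b X)
    (hS : DualFeasible C Cbar A ε y S) (h : (X * S).trace ≤ 0) :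
    (y, S) ∈ DualOpt C Cbar A b ε := by
  refine ⟨hS, fun y' S' hS' => ?_⟩
  have hgap' := trace_mul_nonneg_of_feasible hX hS'
  rw [trace_mul_eq_dualityGap hX hS] at h
  rw [trace_mul_eq_dualityGap hX hS'] at hgap'
  linarith

theorem ker_mulVecLin_le_of_mem_intrinsicInterior_primalOpt
    (hX : X ∈ intrinsicInterior ℝ (PrimalOpt C Cbar A b ε)) (hX' : X' ∈ PrimalOpt C Cbar A b ε) :
    LinearMap.ker X.mulVecLin ≤ LinearMap.ker X'.mulVecLin := by
  obtain ⟨t, ht, hmem⟩ := exists_pos_add_smul_sub_mem hX hX'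
  exact ker_mulVecLin_le_of_posSemidef_add_smul_sub hX'.1.2.2 ht hmem.1.2.2

theorem ker_mulVecLin_le_of_mem_intrinsicInterior_dualOpt
    (hS : (y, S) ∈ intrinsicInterior ℝ (DualOpt C Cbar A b ε))
    (hS' : (y', S') ∈ DualOpt C Cbar A b ε) :
    LinearMap.ker S.mulVecLin ≤ LinearMap.ker S'.mulVecLin := by
  obtain ⟨t, ht, hmem⟩ := exists_pos_add_smul_sub_mem hS hS'
  exact ker_mulVecLin_le_of_posSemidef_add_smul_sub hS'.1.2.2 ht hmem.1.2.2

theorem trace_mul_of_centralSol (h : CentralSol C Cbar A b ε μ X y S) :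
    (X * S).trace = n * μ := by
  simp [h.2.2, mul_comm]

theorem trace_mul_add_trace_mul_le_of_centralSol (h : CentralSol C Cbar A b ε μ X y S)
    (hX' : X' ∈ PrimalOpt C Cbar A b ε) (hS' : (y', S') ∈ DualOpt C Cbar A b ε) :
    (X * S').trace + (X' * S).trace ≤ 2 * n * μ := by
  have hcross := trace_mul_add_trace_mul_eq h.1 hX'.1 h.2.1 hS'.1
  have hopt := trace_mul_le_trace_mul_of_opt hX' hS' h.1 h.2.1
  rw [trace_mul_of_centralSol h] at hcross hopt
  linarith

variable {Xs Ss X₀ S₀ : Matrix (Fin n) (Fin n) ℝ} {ys y₀ : Fin m → ℝ}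
  {p : Matrix (Fin n) (Fin n) ℝ → Prop}

theorem exists_pos_forall_centralSol_primal (hX₀ : PrimalFeasible A b X₀)
    (hS₀ : DualFeasible C Cbar A ε y₀ S₀) (hS₀pos : S₀.PosDef)
    (hmc : MaxComp C Cbar A b ε Xs ys Ss)
    (hp : ∀ X : Matrix (Fin n) (Fin n) ℝ, X.PosSemidef →
      LinearMap.range X.mulVecLin = LinearMap.range Xs.mulVecLin → ∀ᶠ Y in 𝓝 X, p Y) :
    ∃ μ₀, 0 < μ₀ ∧ ∀ μ, 0 < μ → μ < μ₀ → ∀ X S y, CentralSol C Cbar A b ε μ X y S → p X := by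
  have hXs := intrinsicInterior_subset hmc.1
  have hSs := intrinsicInterior_subset hmc.2
  obtain ⟨μ₀, hμ₀, hμ₀p⟩ := exists_pos_forall_of_mul_eq_smul_one (W := Ss)
    (κ := (X₀ * S₀).trace) (c := 2 * n) isClosed_setOf_primalFeasible (fun X hX => hX.2.2)
    hS₀pos hXs.1.2.2
    (fun X hX hXSs => ker_mulVecLin_le_of_mem_intrinsicInterior_primalOpt hmc.1
      (mem_primalOpt_of_trace_mul_nonpos hX hSs.1 hXSs)) hp (by positivity)
  refine ⟨μ₀, hμ₀, fun μ hμ hμlt X S y h => ?_⟩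
  have hopt := trace_mul_add_trace_mul_le_of_centralSol h hXs hSs
  have hXSs := trace_mul_nonneg_of_feasible h.1 hSs.1
  have hXsS := trace_mul_nonneg_of_feasible hXs.1 h.2.1
  have hinit := trace_mul_add_trace_mul_eq h.1 hX₀ h.2.1 hS₀
  have hX₀S := trace_mul_nonneg_of_feasible hX₀ h.2.1
  have hnμ : 0 ≤ n * μ := by positivity
  rw [trace_mul_of_centralSol h] at hinit
  exact hμ₀p μ hμ hμlt X h.1 S h.2.1.2.2 h.2.2 (by linarith) (by linarith) (by linarith)

theorem exists_pos_forall_centralSol_dual (hX₀ : PrimalFeasible A b X₀) (hX₀pos : X₀.PosDef)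
    (hS₀ : DualFeasible C Cbar A ε y₀ S₀) (hmc : MaxComp C Cbar A b ε Xs ys Ss)
    (hp : ∀ S : Matrix (Fin n) (Fin n) ℝ, S.PosSemidef →
      LinearMap.range S.mulVecLin = LinearMap.range Ss.mulVecLin → ∀ᶠ Y in 𝓝 S, p Y) :
    ∃ μ₀, 0 < μ₀ ∧ ∀ μ, 0 < μ → μ < μ₀ → ∀ X S y, CentralSol C Cbar A b ε μ X y S → p S := by
  have hXs := intrinsicInterior_subset hmc.1
  have hSs := intrinsicInterior_subset hmc.2
  obtain ⟨μ₀, hμ₀, hμ₀p⟩ := exists_pos_forall_of_mul_eq_smul_one (W := Xs)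
    (κ := (X₀ * S₀).trace) (c := 2 * n) isClosed_setOf_exists_dualFeasible
    (fun S ⟨_, hS⟩ => hS.2.2) hX₀pos hSs.1.2.2
    (fun S ⟨_, hS⟩ hSXs => ker_mulVecLin_le_of_mem_intrinsicInterior_dualOpt hmc.2
      (mem_dualOpt_of_trace_mul_nonpos hXs.1 hS (trace_mul_comm S Xs ▸ hSXs))) hp (by positivity)
  refine ⟨μ₀, hμ₀, fun μ hμ hμlt X S y h => ?_⟩
  have hSX : S * X = μ • 1 := by
    simpa [transpose_mul, h.1.1.eq, h.2.1.1.eq] using congrArg transpose h.2.2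
  have hopt := trace_mul_add_trace_mul_le_of_centralSol h hXs hSs
  have hXSs := trace_mul_nonneg_of_feasible h.1 hSs.1
  have hXsS := trace_mul_nonneg_of_feasible hXs.1 h.2.1
  have hinit := trace_mul_add_trace_mul_eq h.1 hX₀ h.2.1 hS₀
  have hXS₀ := trace_mul_nonneg_of_feasible h.1 hS₀
  have hnμ : 0 ≤ n * μ := by positivity
  rw [trace_mul_of_centralSol h] at hinit
  refine hμ₀p μ hμ hμlt S ⟨y, h.2.1⟩ X h.1.2.2 hSX ?_ ?_ ?_ <;> rw [trace_mul_comm] <;> linarith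

end CentralPath

theorem stmt17_general {n m : ℕ} {C Cbar : Matrix (Fin n) (Fin n) ℝ}
    {A : Fin m → Matrix (Fin n) (Fin n) ℝ} {b : Fin m → ℝ} {ε : ℝ}
    {X₀ S₀ Xs Ss : Matrix (Fin n) (Fin n) ℝ} {y₀ ys : Fin m → ℝ}
    (hX₀ : PrimalFeasible A b X₀) (hX₀pos : X₀.PosDef)
    (hS₀ : DualFeasible C Cbar A ε y₀ S₀) (hS₀pos : S₀.PosDef)
    (hmc : MaxComp C Cbar A b ε Xs ys Ss) {nB nN : ℕ} (hnB : nB ≤ n) (hnN : nN ≤ n)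
    {QB : Matrix (Fin n) (Fin nB) ℝ} {QN : Matrix (Fin n) (Fin nN) ℝ}
    (hQB : QBᵀ * QB = 1)
    (hQBrange : LinearMap.range QB.mulVecLin = LinearMap.range Xs.mulVecLin)
    (hQN : QNᵀ * QN = 1)
    (hQNrange : LinearMap.range QN.mulVecLin = LinearMap.range Ss.mulVecLin) :
    ((∃ μt, 0 < μt ∧ ∀ μ, 0 < μ → μ < μt → ∀ X S y, CentralSol C Cbar A b ε μ X y S →
        HasLeadingEigengap nB X) ∧
      ∀ η, 0 < η → ∃ μ₀, 0 < μ₀ ∧ ∀ μ, 0 < μ → μ < μ₀ → ∀ X S y,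
        CentralSol C Cbar A b ε μ X y S → LeadingEigenspaceWithin hnB QB η X) ∧
    ((∃ μt, 0 < μt ∧ ∀ μ, 0 < μ → μ < μt → ∀ X S y, CentralSol C Cbar A b ε μ X y S →
        HasLeadingEigengap nN S) ∧
      ∀ η, 0 < η → ∃ μ₀, 0 < μ₀ ∧ ∀ μ, 0 < μ → μ < μ₀ → ∀ X S y,
        CentralSol C Cbar A b ε μ X y S → LeadingEigenspaceWithin hnN QN η S) := by
  refine ⟨⟨?_, fun η hη => ?_⟩, ?_, fun η hη => ?_⟩
  · exact exists_pos_forall_centralSol_primal hX₀ hS₀ hS₀pos hmc fun X hX hXs =>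
      eventually_hasLeadingEigengap hX hQB (hQBrange.trans hXs.symm)
  · exact exists_pos_forall_centralSol_primal hX₀ hS₀ hS₀pos hmc fun X hX hXs =>
      eventually_leadingEigenspaceWithin hnB hX hQB (hQBrange.trans hXs.symm) hη
  · exact exists_pos_forall_centralSol_dual hX₀ hX₀pos hS₀ hmc fun S hS hSs =>
      eventually_hasLeadingEigengap hS hQN (hQNrange.trans hSs.symm)
  · exact exists_pos_forall_centralSol_dual hX₀ hX₀pos hS₀ hmc fun S hS hSs =>
      eventually_leadingEigenspaceWithin hnN hS hQN (hQNrange.trans hSs.symm) hη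

end

/-- for small `μ` the dominant eigenvalue gaps of the central solutions are
positive, and the corresponding eigenspaces converge to `B` and `N` as `μ → 0⁺`. -/
theorem stmt17 {n m : ℕ} (C Cbar : Matrix (Fin n) (Fin n) ℝ)
    (A : Fin m → Matrix (Fin n) (Fin n) ℝ) (b : Fin m → ℝ)
    (hSA : StandingAssumptions C Cbar A b)
    (Xs Ss : Matrix (Fin n) (Fin n) ℝ) (ys : Fin m → ℝ)
    (hmc : MaxComp C Cbar A b 0 Xs ys Ss)
    (nB nN : ℕ) (hnBle : nB ≤ n) (hnNle : nN ≤ n)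
    (hnB : nB = Module.finrank ℝ (LinearMap.range Xs.mulVecLin))
    (hnN : nN = Module.finrank ℝ (LinearMap.range Ss.mulVecLin))
    (QB : Matrix (Fin n) (Fin nB) ℝ) (QN : Matrix (Fin n) (Fin nN) ℝ)
    (hQBorth : QBᵀ * QB = 1)
    (hQBrange : LinearMap.range QB.mulVecLin = LinearMap.range Xs.mulVecLin)
    (hQNorth : QNᵀ * QN = 1)
    (hQNrange : LinearMap.range QN.mulVecLin = LinearMap.range Ss.mulVecLin) :
    (1 ≤ nB →
      (∃ μt : ℝ, 0 < μt ∧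
        ∀ μ : ℝ, 0 < μ → μ < μt →
          ∀ (Xμ Sμ : Matrix (Fin n) (Fin n) ℝ) (yμ : Fin m → ℝ),
            CentralSol C Cbar A b 0 μ Xμ yμ Sμ →
            ∀ (φ : Fin n → ℝ) (QX : Matrix (Fin n) (Fin n) ℝ), Antitone φ →
              QXᵀ * QX = 1 → Xμ * QX = QX * Matrix.diagonal φ →
              ∀ i j : Fin n, (i : ℕ) < nB → nB ≤ (j : ℕ) → φ j < φ i) ∧
      (∀ η : ℝ, 0 < η → ∃ μ₀ : ℝ, 0 < μ₀ ∧
        ∀ μ : ℝ, 0 < μ → μ < μ₀ →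
          ∀ (Xμ Sμ : Matrix (Fin n) (Fin n) ℝ) (yμ : Fin m → ℝ),
            CentralSol C Cbar A b 0 μ Xμ yμ Sμ →
            ∀ (φ : Fin n → ℝ) (QX : Matrix (Fin n) (Fin n) ℝ), Antitone φ →
              QXᵀ * QX = 1 → Xμ * QX = QX * Matrix.diagonal φ →
              specNorm ((QX.submatrix id (Fin.castLE hnBle)) *
                  (QX.submatrix id (Fin.castLE hnBle))ᵀ - QB * QBᵀ) < η)) ∧
    (1 ≤ nN →
      (∃ μt : ℝ, 0 < μt ∧
        ∀ μ : ℝ, 0 < μ → μ < μt →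
          ∀ (Xμ Sμ : Matrix (Fin n) (Fin n) ℝ) (yμ : Fin m → ℝ),
            CentralSol C Cbar A b 0 μ Xμ yμ Sμ →
            ∀ (ψ : Fin n → ℝ) (QS : Matrix (Fin n) (Fin n) ℝ), Antitone ψ →
              QSᵀ * QS = 1 → Sμ * QS = QS * Matrix.diagonal ψ →
              ∀ i j : Fin n, (i : ℕ) < nN → nN ≤ (j : ℕ) → ψ j < ψ i) ∧
      (∀ η : ℝ, 0 < η → ∃ μ₀ : ℝ, 0 < μ₀ ∧
        ∀ μ : ℝ, 0 < μ → μ < μ₀ →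
          ∀ (Xμ Sμ : Matrix (Fin n) (Fin n) ℝ) (yμ : Fin m → ℝ),
            CentralSol C Cbar A b 0 μ Xμ yμ Sμ →
            ∀ (ψ : Fin n → ℝ) (QS : Matrix (Fin n) (Fin n) ℝ), Antitone ψ →
              QSᵀ * QS = 1 → Sμ * QS = QS * Matrix.diagonal ψ →
              specNorm ((QS.submatrix id (Fin.castLE hnNle)) *
                  (QS.submatrix id (Fin.castLE hnNle))ᵀ - QN * QNᵀ) < η)) := by
  obtain ⟨-, -, -, -, X₀, y₀, S₀, hX₀, hX₀pos, hS₀, hS₀pos⟩ := hSA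
  obtain ⟨hB, hN⟩ := stmt17_general hX₀ hX₀pos hS₀ hS₀pos hmc hnBle hnNle hQBorth hQBrange hQNorth
    hQNrange
  exact ⟨fun _ => hB, fun _ => hN⟩
end

section
/- Suppose at ε̄ ∈ int(E) the optimal sets P*(ε̄) and D*(ε̄) are singletons {X*} and {(y*, S*)}, and that (X*, y*, S*) is strictly complementary. Then there exists ξ > 0 with (ε̄−ξ, ε̄+ξ) ⊆ int(E) such that for every ε ∈ (ε̄−ξ, ε̄+ξ) the problems (P_ε) and (D_ε) have unique optimal solutions (X*(ε), y*(ε), S*(ε)), the map ε ↦ (X*(ε), y*(ε), S*(ε)) is continuously differentiable on (ε̄−ξ, ε̄+ξ) with (X*(ε̄), y*(ε̄), S*(ε̄)) = (X*, y*, S*), and each (X*(ε), y*(ε), S*(ε)) is strictly complementary; in particular, dim B(ε) and dim N(ε) are constant on (ε̄−ξ, ε̄+ξ) and ε̄ is not a transition point. -/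
open Matrix Set

attribute [local instance] Matrix.frobeniusNormedAddCommGroup Matrix.frobeniusNormedSpace

/-!
For symmetric matrices with `0 ≤ X + S`, the equation `X * S + S * X = 0` forces
`(X - S)² = (X + S)²`, so `X` and `S` are the positive and negative parts of `X - S`. Near a
strictly complementary pair the optimality conditions are therefore equivalent to the polynomial
system `⟨A i, X⟩ = b i`, `∑ i, y i • A i + S = C + ε • Cbar`, `X * S + S * X = 0`: semidefiniteness
comes for free as long as `X + S` is positive definite.

At a strictly complementary pair, an element of the kernel of the Jacobian of this system is a
direction along which one can move inside the optimal sets, so uniqueness is equivalent to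
nonsingularity of the Jacobian. The inverse function theorem gives a branch of solutions, along
which positive definiteness of `X + S` and nonsingularity of the Jacobian, both open conditions,
persist. Since the ranks are lower semicontinuous and add up to `n`, they are locally constant.

Complementary slackness of the given pair follows from the Fritz John conditions at `Xs`: a
multiplier vanishing on the objective would be a direction of recession of the dual optimal set.
-/

open scoped MatrixOrder Topology ContDiff

section Anticommuting

variable {R : Type*} [NonUnitalRing R] [StarRing R] [TopologicalSpace R] [Module ℝ R]
  [SMulCommClass ℝ R R] [IsScalarTower ℝ R R]
  [NonUnitalContinuousFunctionalCalculus ℝ R IsSelfAdjoint] [PartialOrder R] [StarOrderedRing R]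
  [NonnegSpectrumClass ℝ R] [IsTopologicalRing R] [T2Space R] {a b : R}

theorem abs_sub_eq_add_of_anticommute (ha : IsSelfAdjoint a) (hb : IsSelfAdjoint b)
    (h : a * b + b * a = 0) (hab : 0 ≤ a + b) : CFC.abs (a - b) = a + b := by
  refine CFC.sqrt_unique ?_ hab
  rw [(ha.sub hb).star_eq, ← sub_eq_zero, ← smul_zero (2 : ℕ), ← h]
  noncomm_ring

theorem posPart_negPart_sub_of_anticommute (ha : IsSelfAdjoint a) (hb : IsSelfAdjoint b)
    (h : a * b + b * a = 0) (hab : 0 ≤ a + b) : (a - b)⁺ = a ∧ (a - b)⁻ = b := by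
  have hpos : a + b + (a - b) = (2 : ℕ) • (a - b)⁺ :=
    abs_sub_eq_add_of_anticommute ha hb h hab ▸ CFC.abs_add_self (a - b) (ha.sub hb)
  have hpos' : (a - b)⁺ = a := by
    refine smul_right_injective R (two_ne_zero (α := ℝ)) ?_
    beta_reduce
    rw [two_smul, ← two_nsmul, ← hpos, two_smul]
    abel
  refine ⟨hpos', ?_⟩
  have hsub := CFC.posPart_sub_negPart (a - b) (ha.sub hb)
  rw [hpos'] at hsub
  exact sub_right_injective hsub

end Anticommuting

section PosSemidef
variable {ι : Type*} [Fintype ι] {X S : Matrix ι ι ℝ}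

theorem posSemidef_and_mul_eq_zero_of_anticommute (hX : X.IsHermitian)
    (hS : S.IsHermitian) (h : X * S + S * X = 0) (hXS : (X + S).PosSemidef) :
    X.PosSemidef ∧ S.PosSemidef ∧ X * S = 0 := by
  classical
  obtain ⟨hpos, hneg⟩ :=
    posPart_negPart_sub_of_anticommute hX.isSelfAdjoint hS.isSelfAdjoint h hXS.nonneg
  rw [← Matrix.nonneg_iff_posSemidef, ← Matrix.nonneg_iff_posSemidef]
  exact ⟨hpos ▸ CFC.posPart_nonneg _, hneg ▸ CFC.negPart_nonneg _,
    by simpa only [hpos, hneg] using CFC.posPart_mul_negPart (X - S)⟩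

theorem exists_conj_diagonal_posPart_negPart [DecidableEq ι] (hX : X.PosSemidef)
    (hS : S.PosSemidef) (h : X * S = 0) :
    ∃ (U : unitary (Matrix ι ι ℝ)) (w : ι → ℝ),
      X = Unitary.conjStarAlgAut ℝ (Matrix ι ι ℝ) U (diagonal w⁺) ∧
        S = Unitary.conjStarAlgAut ℝ (Matrix ι ι ℝ) U (diagonal w⁻) := by
  have hD : (X - S).IsHermitian := hX.1.sub hS.1
  obtain ⟨hpos, hneg⟩ :=
    CFC.posPart_negPart_unique (a := X - S) rfl h hX.nonneg hS.nonneg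
  refine ⟨hD.eigenvectorUnitary, hD.eigenvalues, hpos.symm.trans ?_, hneg.symm.trans ?_⟩
  · rw [CFC.posPart_def, cfcₙ_eq_cfc, hD.cfc_eq]
    rfl
  · rw [CFC.negPart_def, cfcₙ_eq_cfc, hD.cfc_eq]
    rfl

theorem trace_mul_nonneg (hX : X.PosSemidef) (hS : S.PosSemidef) : 0 ≤ (X * S).trace := by
  classical
  obtain ⟨P, rfl⟩ := CStarAlgebra.nonneg_iff_eq_star_mul_self.1 hX.nonneg
  rw [Matrix.mul_assoc, trace_mul_comm]
  exact (hS.mul_mul_conjTranspose_same P).trace_nonneg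

theorem mul_eq_zero_of_trace_mul_eq_zero (hX : X.PosSemidef) (hS : S.PosSemidef)
    (h : (X * S).trace = 0) : X * S = 0 := by
  classical
  obtain ⟨P, rfl⟩ := CStarAlgebra.nonneg_iff_eq_star_mul_self.1 hX.nonneg
  obtain ⟨Q, rfl⟩ := CStarAlgebra.nonneg_iff_eq_star_mul_self.1 hS.nonneg
  have hQP : (star (P * star Q) * (P * star Q)).trace = 0 := by
    rw [← h, star_mul, star_star, Matrix.mul_assoc, trace_mul_comm]
    simp only [Matrix.mul_assoc]
  rw [star_eq_conjTranspose, trace_conjTranspose_mul_self_eq_zero_iff] at hQP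
  calc star P * P * (star Q * Q) = star P * (P * star Q) * Q := by simp only [Matrix.mul_assoc]
    _ = 0 := by rw [hQP, Matrix.mul_zero, Matrix.zero_mul]

end PosSemidef

section Kernel

theorem mul_nonpos_of_weighted_add_eq_zero {p q d e : ℝ} (hp : 0 ≤ p) (hq : 0 ≤ q)
    (hpq : 0 < p + q) (h : p * d + q * e = 0) : d * e ≤ 0 := by
  have hsum : (p + q) * (d * e) = -(p * d ^ 2 + q * e ^ 2) := by linear_combination (d + e) * h
  exact nonpos_of_mul_nonpos_right (hsum.trans_le (neg_nonpos.2 (by positivity))) hpq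

theorem weighted_eq_zero_of_mul_eq_zero {p q d e : ℝ} (h : p * d + q * e = 0)
    (hde : d * e = 0) : p * d = 0 ∧ q * e = 0 := by
  rcases mul_eq_zero.1 hde with rfl | rfl <;> simpa using h

variable {ι : Type*} [Fintype ι]

theorem mul_diagonal_eq_zero_of_trace_mul_eq_zero [DecidableEq ι] {x s : ι → ℝ}
    {D E : Matrix ι ι ℝ} (hx : 0 ≤ x) (hs : 0 ≤ s) (hxs : ∀ i, 0 < x i + s i) (hE : E.IsSymm)
    (htr : (D * E).trace = 0)
    (h : D * diagonal s + diagonal s * D + diagonal x * E + E * diagonal x = 0) :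
    D * diagonal s = 0 ∧ E * diagonal x = 0 := by
  have hentry (i j : ι) : (s i + s j) * D i j + (x i + x j) * E i j = 0 := by
    have := congrFun₂ h i j
    simp only [Matrix.add_apply, mul_diagonal, diagonal_mul, Matrix.zero_apply] at this
    linear_combination this
  have hnonpos (i j : ι) : D i j * E i j ≤ 0 :=
    mul_nonpos_of_weighted_add_eq_zero (add_nonneg (hs i) (hs j)) (add_nonneg (hx i) (hx j))
      (by linarith [hxs i, hxs j]) (hentry i j)
  have hsum : ∑ i, ∑ j, D i j * E i j = 0 := by
    simpa only [trace, diag_apply, mul_apply, hE.apply] using htr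
  have hzero (i j : ι) : D i j * E i j = 0 := by
    rw [Fintype.sum_eq_zero_iff_of_nonpos fun i ↦ Finset.sum_nonpos fun j _ ↦ hnonpos i j] at hsum
    exact congrFun ((Fintype.sum_eq_zero_iff_of_nonpos (hnonpos i)).1 (congrFun hsum i)) j
  have hvanish (i j : ι) := weighted_eq_zero_of_mul_eq_zero (hentry i j) (hzero i j)
  constructor <;> ext i j <;> rw [mul_diagonal, Matrix.zero_apply]
  · rcases mul_eq_zero.1 (hvanish i j).1 with h0 | h0
    · rw [((add_eq_zero_iff_of_nonneg (hs i) (hs j)).1 h0).2, mul_zero]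
    · rw [h0, zero_mul]
  · rcases mul_eq_zero.1 (hvanish i j).2 with h0 | h0
    · rw [((add_eq_zero_iff_of_nonneg (hx i) (hx j)).1 h0).2, mul_zero]
    · rw [h0, zero_mul]

theorem trace_conjStarAlgAut [DecidableEq ι] (U : unitary (Matrix ι ι ℝ)) (M : Matrix ι ι ℝ) :
    (Unitary.conjStarAlgAut ℝ (Matrix ι ι ℝ) U M).trace = M.trace := by
  rw [Unitary.conjStarAlgAut_apply, trace_mul_cycle, Unitary.coe_star_mul_self, Matrix.one_mul]

theorem mul_eq_zero_of_linearized_complementarity {X S DX DS : Matrix ι ι ℝ} (hX : X.PosSemidef)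
    (hS : S.PosSemidef) (hXS : X * S = 0) (hpd : (X + S).PosDef) (hDS : DS.IsSymm)
    (htr : (DX * DS).trace = 0) (h : DX * S + S * DX + X * DS + DS * X = 0) :
    DX * S = 0 ∧ DS * X = 0 := by
  classical
  obtain ⟨U, w, rfl, rfl⟩ := exists_conj_diagonal_posPart_negPart hX hS hXS
  set φ := Unitary.conjStarAlgAut ℝ (Matrix ι ι ℝ) U
  obtain ⟨D, rfl⟩ := EquivLike.surjective φ DX
  obtain ⟨E, rfl⟩ := EquivLike.surjective φ DS
  have hw (i : ι) : 0 < w⁺ i + w⁻ i := by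
    have : IsUnit (diagonal w⁺ + diagonal w⁻) := by
      simpa only [← map_add, isUnit_map_iff] using hpd.isUnit
    rw [diagonal_add, isUnit_diagonal, Pi.isUnit_iff] at this
    exact (add_nonneg (posPart_nonneg w i) (negPart_nonneg w i)).lt_of_ne' (this i).ne_zero
  have hE : E.IsSymm := by
    refine EquivLike.injective φ ?_
    rw [← conjTranspose_eq_transpose_of_trivial, ← star_eq_conjTranspose, map_star,
      star_eq_conjTranspose, conjTranspose_eq_transpose_of_trivial, hDS]
  simp only [← map_mul, ← map_add, map_eq_zero_iff φ (EquivLike.injective φ)] at h ⊢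
  rw [← map_mul, trace_conjStarAlgAut] at htr
  exact mul_diagonal_eq_zero_of_trace_mul_eq_zero (posPart_nonneg w) (negPart_nonneg w) hw hE htr h

end Kernel

theorem nonneg_and_le_of_forall_le_add_mul {k a c : ℝ} (h : ∀ t > 0, k ≤ a + t * c) :
    0 ≤ c ∧ k ≤ a := by
  constructor
  · by_contra! hc
    have hpos : 0 < (|a - k| + 1) / -c := by positivity [neg_pos.2 hc]
    have := h _ hpos
    rw [div_mul_eq_mul_div, div_neg, mul_div_cancel_right₀ _ hc.ne] at this
    linarith [le_abs_self (a - k)]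
  · have hlim : Filter.Tendsto (fun t : ℝ ↦ a + t * c) (𝓝[>] 0) (𝓝 (a + 0 * c)) :=
      (Continuous.tendsto (by fun_prop) 0).mono_left nhdsWithin_le_nhds
    rw [zero_mul, add_zero] at hlim
    exact ge_of_tendsto hlim (eventually_mem_nhdsWithin.mono h)

theorem exists_lt_apply_of_apply_notMem_image {E F : Type*} [AddCommGroup E] [Module ℝ E]
    [TopologicalSpace E] [IsTopologicalAddGroup E] [ContinuousSMul ℝ E] [AddCommGroup F]
    [Module ℝ F] {O : Set E} (hO : IsOpen O) (hconv : Convex ℝ O) (T : E →ₗ[ℝ] F) {x₀ : E}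
    (hx₀ : T x₀ ∉ T '' O) :
    ∃ g : F →ₗ[ℝ] ℝ, ∀ x ∈ O, g (T x) < g (T x₀) := by
  have hdisj : Disjoint O (T ⁻¹' {T x₀}) :=
    Set.disjoint_left.2 fun x hx hTx ↦ hx₀ ⟨x, hx, hTx⟩
  obtain ⟨f, u, hlt, hle⟩ := geometric_hahn_banach_open hconv hO
    ((convex_singleton (T x₀)).linear_preimage T) hdisj
  have hnonneg (z : E) (hz : T z = 0) : 0 ≤ f z := by
    refine (nonneg_and_le_of_forall_le_add_mul (k := u) (a := f x₀) fun t _ ↦ ?_).1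
    simpa using hle (x₀ + t • z) (by simp [hz])
  have hker (z : E) (hz : T z = 0) : f z = 0 :=
    le_antisymm (by simpa using hnonneg (-z) (by simp [hz])) (hnonneg z hz)
  have hmem : (f : E →ₗ[ℝ] ℝ) ∈ (LinearMap.ker T).dualAnnihilator :=
    (Submodule.mem_dualAnnihilator _).2 hker
  rw [← LinearMap.range_dualMap_eq_dualAnnihilator_ker] at hmem
  obtain ⟨g, hg⟩ := hmem
  have hgf (x : E) : g (T x) = f x := LinearMap.congr_fun hg x
  exact ⟨g, fun x hx ↦ by simpa only [hgf] using (hlt x hx).trans_le (hle x₀ rfl)⟩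

section PosDef

theorem eventually_posDef_of_isHermitian {ι : Type*} [Finite ι] {M : Matrix ι ι ℝ}
    (hM : M.PosDef) : ∀ᶠ N in 𝓝 M, N.IsHermitian → N.PosDef := by
  have := Fintype.ofFinite ι
  have hsphere : ∀ᶠ N in 𝓝 M, ∀ z ∈ Metric.sphere (0 : ι → ℝ) 1, 0 < z ⬝ᵥ (N *ᵥ z) := by
    refine (isCompact_sphere 0 1).eventually_forall_of_forall_eventually
      (P := fun N z ↦ 0 < z ⬝ᵥ (N *ᵥ z)) fun z hz ↦ ?_
    have hcont : Continuous fun p : Matrix ι ι ℝ × (ι → ℝ) ↦ p.2 ⬝ᵥ (p.1 *ᵥ p.2) := by fun_prop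
    exact hcont.continuousAt.eventually_const_lt
      (by simpa using hM.dotProduct_mulVec_pos (ne_zero_of_mem_unit_sphere ⟨z, hz⟩))
  filter_upwards [hsphere] with N hN hherm
  refine .of_dotProduct_mulVec_pos hherm fun z hz ↦ ?_
  have hpos := hN (‖z‖⁻¹ • z) (by simp [norm_smul, hz])
  rw [mulVec_smul, smul_dotProduct, dotProduct_smul, smul_smul, smul_eq_mul] at hpos
  simpa using pos_of_mul_pos_right hpos (by positivity)

theorem posSemidef_and_nonpos_of_forall_le_trace {ι : Type*} [Fintype ι] {P : Matrix ι ι ℝ}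
    {k : ℝ} (hP : P.IsHermitian) (h : ∀ M : Matrix ι ι ℝ, M.PosDef → k ≤ (P * M).trace) :
    P.PosSemidef ∧ k ≤ 0 := by
  classical
  constructor
  · refine .of_dotProduct_mulVec_nonneg hP fun z ↦ ?_
    refine (nonneg_and_le_of_forall_le_add_mul (k := k) (a := P.trace) fun t ht ↦ ?_).1
    refine (h (1 + t • vecMulVec z (star z)) (PosDef.one.add_posSemidef
      ((posSemidef_vecMulVec_self_star z).smul ht.le))).trans_eq ?_
    rw [Matrix.mul_add, Matrix.mul_one, Matrix.mul_smul, trace_add, trace_smul, mul_vecMulVec,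
      trace_vecMulVec, dotProduct_comm, smul_eq_mul]
  · refine (nonneg_and_le_of_forall_le_add_mul (c := P.trace) fun t ht ↦ ?_).2
    simpa using h (t • 1) (PosDef.one.smul ht)

end PosDef

/-- The positive definite matrices as a subset of the space of symmetric ones, in which they form
an open set. -/
def posDefCone (ι : Type*) : Set (selfAdjoint.submodule ℝ (Matrix ι ι ℝ)) :=
  {M | (M : Matrix ι ι ℝ).PosDef}

theorem isOpen_posDefCone {ι : Type*} [Finite ι] : IsOpen (posDefCone ι) :=
  isOpen_iff_mem_nhds.2 fun _ hM ↦
    (continuous_subtype_val.continuousAt.eventually (eventually_posDef_of_isHermitian hM)).mono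
      fun N hN ↦ hN N.2

theorem convex_posDefCone {ι : Type*} : Convex ℝ (posDefCone ι) :=
  convex_iff_forall_pos.2 fun _ hM _ hN _ _ hs ht _ ↦ (hM.smul hs).add (hN.smul ht)

theorem isSymm_sum_smul {ι κ : Type*} [Fintype κ] {A : κ → Matrix ι ι ℝ} (hA : ∀ i, (A i).IsSymm)
    (y : κ → ℝ) : (∑ i, y i • A i).IsSymm := by
  simp only [IsSymm, transpose_sum, transpose_smul, (hA _).eq]

section FritzJohn

variable {n m : ℕ} {C Cbar : Matrix (Fin n) (Fin n) ℝ} {A : Fin m → Matrix (Fin n) (Fin n) ℝ}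
  {b : Fin m → ℝ} {ε : ℝ} {X : Matrix (Fin n) (Fin n) ℝ}

/-- The map `(M, r) ↦ (⟨A i, M⟩, ⟨C, M⟩ + r)` on pairs of a symmetric matrix and a slack `r` in the
objective; optimality of `X` says that it does not hit its value at `(X, 0)` when `0 < r`. -/
def constraintObjectiveMap (C : Matrix (Fin n) (Fin n) ℝ) (A : Fin m → Matrix (Fin n) (Fin n) ℝ) :
    selfAdjoint.submodule ℝ (Matrix (Fin n) (Fin n) ℝ) × ℝ →ₗ[ℝ] (Fin m → ℝ) × ℝ where
  toFun p := (fun i ↦ (A i * p.1).trace, (C * p.1).trace + p.2)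
  map_add' p q := by
    ext <;> simp [Matrix.mul_add, add_add_add_comm]
  map_smul' t p := by
    ext <;> simp [mul_add]

theorem constraintObjectiveMap_apply
    (p : selfAdjoint.submodule ℝ (Matrix (Fin n) (Fin n) ℝ) × ℝ) :
    constraintObjectiveMap C A p = (fun i ↦ (A i * p.1).trace, (C * p.1).trace + p.2) := rfl

theorem dual_apply_eq_sum_add (g : (Fin m → ℝ) × ℝ →ₗ[ℝ] ℝ) (u : Fin m → ℝ) (r : ℝ) :
    g (u, r) = ∑ i, u i * g (Pi.single i 1, 0) + r * g (0, 1) := by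
  have hsingle (i : Fin m) : (fun j ↦ if i = j then (1 : ℝ) else 0) = Pi.single i 1 := by
    ext j
    simp only [Pi.single_apply, eq_comm]
  have hu := (g ∘ₗ LinearMap.inl ℝ (Fin m → ℝ) ℝ).pi_apply_eq_sum_univ u
  have hr : g (0, r) = r * g (0, 1) := by rw [← smul_eq_mul, ← map_smul]; simp
  calc g (u, r) = g (u, 0) + g (0, r) := by rw [← map_add]; simp
    _ = _ := by
      simpa only [LinearMap.comp_apply, LinearMap.inl_apply, hsingle, hr, smul_eq_mul] using
        congrArg (· + r * g (0, 1)) hu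

theorem exists_multipliers_trace_lt (hX : X ∈ PrimalOpt C Cbar A b ε) :
    ∃ (τ : ℝ) (c : Fin m → ℝ), ∀ M : Matrix (Fin n) (Fin n) ℝ, M.PosDef → ∀ r > 0,
      ((τ • (C + ε • Cbar) - ∑ i, c i • A i) * X).trace <
        ((τ • (C + ε • Cbar) - ∑ i, c i • A i) * M).trace + r * τ := by
  have hmiss : constraintObjectiveMap (C + ε • Cbar) A (⟨X, hX.1.2.2.1⟩, 0) ∉
      constraintObjectiveMap (C + ε • Cbar) A ''
        (posDefCone (Fin n) ×ˢ Ioi 0) := by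
    rintro ⟨⟨⟨M, hM⟩, r⟩, ⟨hpd, hr⟩, hT⟩
    simp only [constraintObjectiveMap_apply, Prod.mk.injEq, add_zero] at hT
    have hopt := hX.2 M ⟨isHermitian_iff_isSymm.1 hM,
      fun i ↦ (congrFun hT.1 i).trans (hX.1.2.1 i), hpd.posSemidef⟩
    linarith [hT.2, mem_Ioi.1 hr]
  have hopen : IsOpen (posDefCone (Fin n) ×ˢ Ioi (0 : ℝ)) := isOpen_posDefCone.prod isOpen_Ioi
  have hconv : Convex ℝ (posDefCone (Fin n) ×ˢ Ioi (0 : ℝ)) :=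
    convex_posDefCone.prod (convex_Ioi 0)
  obtain ⟨g, hg⟩ := exists_lt_apply_of_apply_notMem_image hopen hconv _ hmiss
  refine ⟨-g (0, 1), fun i ↦ g (Pi.single i 1, 0), fun M hM r hr ↦ ?_⟩
  have hsep := hg (⟨M, hM.1⟩, r) ⟨hM, hr⟩
  simp only [constraintObjectiveMap_apply] at hsep
  rw [dual_apply_eq_sum_add, dual_apply_eq_sum_add g fun i ↦ (A i * X).trace] at hsep
  simp only [Matrix.sub_mul, Matrix.smul_mul, Finset.sum_mul, trace_sub, trace_smul, trace_sum,
    smul_eq_mul, mul_comm (g _) (trace _)]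
  linarith

theorem exists_fritzJohn_multipliers (hC : C.IsSymm) (hCbar : Cbar.IsSymm)
    (hA : ∀ i, (A i).IsSymm) (hX : X ∈ PrimalOpt C Cbar A b ε) :
    ∃ (τ : ℝ) (c : Fin m → ℝ), (τ, c) ≠ 0 ∧ 0 ≤ τ ∧
      (τ • (C + ε • Cbar) - ∑ i, c i • A i).PosSemidef ∧
        (τ • (C + ε • Cbar) - ∑ i, c i • A i) * X = 0 := by
  obtain ⟨τ, c, hlt⟩ := exists_multipliers_trace_lt hX
  set P := τ • (C + ε • Cbar) - ∑ i, c i • A i with hP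
  have hslack (M : Matrix (Fin n) (Fin n) ℝ) (hM : M.PosDef) :=
    nonneg_and_le_of_forall_le_add_mul fun r hr ↦ (hlt M hM r hr).le
  have hPherm : P.IsHermitian := by
    simp only [isHermitian_iff_isSymm, hP]
    exact ((hC.add (hCbar.smul ε)).smul τ).sub (isSymm_sum_smul hA c)
  obtain ⟨hPpsd, htr⟩ := posSemidef_and_nonpos_of_forall_le_trace hPherm fun M hM ↦ (hslack M hM).2
  refine ⟨τ, c, fun h0 ↦ ?_, (hslack 1 .one).1, hPpsd,
    mul_eq_zero_of_trace_mul_eq_zero hPpsd hX.1.2.2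
      (htr.antisymm (trace_mul_nonneg hPpsd hX.1.2.2))⟩
  obtain ⟨rfl, rfl⟩ := Prod.mk.inj h0
  simpa [P] using hlt 1 .one 1 one_pos

end FritzJohn

section Rank

variable {ι κ : Type*} [Fintype ι]

theorem eventually_rank_le [Finite κ] (X : Matrix κ ι ℝ) : ∀ᶠ Y in 𝓝 X, X.rank ≤ Y.rank := by
  classical
  have := Fintype.ofFinite κ
  let T : Matrix κ ι ℝ →ₗ[ℝ] (ι → ℝ) →L[ℝ] κ → ℝ :=
    LinearMap.toContinuousLinearMap.toLinearMap ∘ₗ (toLin' (R := ℝ)).toLinearMap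
  have hrank (Y : Matrix κ ι ℝ) :
      (X.rank : Cardinal) ≤ (T Y : (ι → ℝ) →ₗ[ℝ] κ → ℝ).rank ↔ X.rank ≤ Y.rank := by
    change (X.rank : Cardinal) ≤ Y.mulVecLin.rank ↔ _
    rw [LinearMap.rank, ← Module.finrank_eq_rank, Nat.cast_le]
    rfl
  have hopen := (isOpen_setOfPred_nat_le_rank (𝕜 := ℝ) (E := ι → ℝ) (F := κ → ℝ)
    X.rank).preimage T.continuous_of_finiteDimensional
  filter_upwards [hopen.mem_nhds ((hrank X).2 le_rfl)] with Y using (hrank Y).1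

theorem rank_add_le_rank_add_rank [Finite κ] (X S : Matrix κ ι ℝ) :
    (X + S).rank ≤ X.rank + S.rank := by
  have := Fintype.ofFinite κ
  have hrange : LinearMap.range (X + S).mulVecLin ≤
      LinearMap.range X.mulVecLin ⊔ LinearMap.range S.mulVecLin :=
    mulVecLin_add X S ▸ LinearMap.range_add_le _ _
  exact (Submodule.finrank_mono hrange).trans (Submodule.finrank_add_le_finrank_add_finrank _ _)

theorem rank_add_rank_eq_card_of_mul_eq_zero {X S : Matrix ι ι ℝ} (h : X * S = 0)
    (hpd : (X + S).PosDef) : X.rank + S.rank = Fintype.card ι := by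
  classical
  refine (rank_add_rank_le_card_of_mul_eq_zero h).antisymm ?_
  simpa only [rank_of_isUnit _ hpd.isUnit] using rank_add_le_rank_add_rank X S

theorem eventually_rank_eq_of_mul_eq_zero {X S : Matrix ι ι ℝ} (h : X * S = 0)
    (hpd : (X + S).PosDef) : ∀ᶠ p : Matrix ι ι ℝ × Matrix ι ι ℝ in 𝓝 (X, S),
      p.1 * p.2 = 0 → (p.1 + p.2).PosDef → p.1.rank = X.rank ∧ p.2.rank = S.rank := by
  filter_upwards [(eventually_rank_le X).prod_inl_nhds S, (eventually_rank_le S).prod_inr_nhds X]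
    with p hX hS hmul hp
  have := rank_add_rank_eq_card_of_mul_eq_zero h hpd
  have := rank_add_rank_eq_card_of_mul_eq_zero hmul hp
  omega

end Rank

section Duality

variable {n m : ℕ} {C Cbar : Matrix (Fin n) (Fin n) ℝ} {A : Fin m → Matrix (Fin n) (Fin n) ℝ}
  {b : Fin m → ℝ} {ε : ℝ} {X X' S S' : Matrix (Fin n) (Fin n) ℝ} {y y' : Fin m → ℝ}

theorem trace_sum_smul_add_mul {ι κ : Type*} [Fintype ι] [Fintype κ] (A : κ → Matrix ι ι ℝ)
    (y : κ → ℝ) (S X : Matrix ι ι ℝ) :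
    ((∑ i, y i • A i + S) * X).trace = ∑ i, y i * (A i * X).trace + (S * X).trace := by
  simp only [Matrix.add_mul, Finset.sum_mul, trace_add, trace_sum, Matrix.smul_mul, trace_smul,
    smul_eq_mul]

theorem trace_objective_mul_eq_add (hX : PrimalFeasible A b X) (hS : DualFeasible C Cbar A ε y S) :
    ((C + ε • Cbar) * X).trace = ∑ i, b i * y i + (S * X).trace := by
  simp only [← hS.2.1, trace_sum_smul_add_mul, hX.2.1, mul_comm (b _)]

theorem mem_interior_Eset_of_eventually {εbar : ℝ}
    (h : ∀ᶠ ε in 𝓝 εbar, ∃ y S, DualFeasible C Cbar A ε y S) :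
    εbar ∈ interior (Eset C Cbar A b) := by
  refine mem_interior_iff_mem_nhds.2 (h.mono fun ε ⟨y, S, hS⟩ ↦ ?_)
  refine (EReal.bot_lt_coe (∑ i, b i * y i)).trans_le (le_sInf ?_)
  rintro _ ⟨X, hX, rfl⟩
  rw [EReal.coe_le_coe_iff, trace_objective_mul_eq_add hX hS, le_add_iff_nonneg_right]
  exact trace_mul_nonneg hS.2.2 hX.2.2

theorem mul_eq_zero_comm_of_isSymm {ι R : Type*} [Fintype ι] [NonUnitalCommSemiring R]
    {X S : Matrix ι ι R} (hX : X.IsSymm) (hS : S.IsSymm) : X * S = 0 ↔ S * X = 0 := by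
  rw [← transpose_eq_zero, transpose_mul, hX.eq, hS.eq]

/-- A pair of feasible solutions of `(P_ε)` and `(D_ε)` without duality gap, as witnessed by
complementary slackness. -/
structure IsComplementary (C Cbar : Matrix (Fin n) (Fin n) ℝ)
    (A : Fin m → Matrix (Fin n) (Fin n) ℝ) (b : Fin m → ℝ) (ε : ℝ)
    (X : Matrix (Fin n) (Fin n) ℝ) (y : Fin m → ℝ) (S : Matrix (Fin n) (Fin n) ℝ) : Prop where
  primal : PrimalFeasible A b X
  dual : DualFeasible C Cbar A ε y S
  mul_eq_zero : X * S = 0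

namespace IsComplementary

theorem mul_eq_zero_symm (h : IsComplementary C Cbar A b ε X y S) : S * X = 0 :=
  (mul_eq_zero_comm_of_isSymm h.primal.1 h.dual.1).1 h.mul_eq_zero

theorem trace_objective_mul_eq (h : IsComplementary C Cbar A b ε X y S) :
    ((C + ε • Cbar) * X).trace = ∑ i, b i * y i := by
  simpa only [h.mul_eq_zero_symm, trace_zero, add_zero] using
    trace_objective_mul_eq_add h.primal h.dual

theorem mem_primalOpt (h : IsComplementary C Cbar A b ε X y S) : X ∈ PrimalOpt C Cbar A b ε := by
  refine ⟨h.primal, fun X' hX' ↦ ?_⟩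
  rw [h.trace_objective_mul_eq, trace_objective_mul_eq_add hX' h.dual, le_add_iff_nonneg_right]
  exact trace_mul_nonneg h.dual.2.2 hX'.2.2

theorem mem_dualOpt (h : IsComplementary C Cbar A b ε X y S) :
    (y, S) ∈ DualOpt C Cbar A b ε := by
  refine ⟨h.dual, fun y' S' hS' ↦ ?_⟩
  rw [← h.trace_objective_mul_eq, trace_objective_mul_eq_add h.primal hS',
    le_add_iff_nonneg_right]
  exact trace_mul_nonneg hS'.2.2 h.primal.2.2

theorem of_mem_primalOpt_of_mem_dualOpt (h : IsComplementary C Cbar A b ε X y S)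
    (hX' : X' ∈ PrimalOpt C Cbar A b ε) (hS' : (y', S') ∈ DualOpt C Cbar A b ε) :
    IsComplementary C Cbar A b ε X' y' S' := by
  refine ⟨hX'.1, hS'.1, mul_eq_zero_of_trace_mul_eq_zero hX'.1.2.2 hS'.1.2.2
    (le_antisymm ?_ (trace_mul_nonneg hX'.1.2.2 hS'.1.2.2))⟩
  calc (X' * S').trace = ((C + ε • Cbar) * X').trace - ∑ i, b i * y' i := by
        rw [trace_objective_mul_eq_add hX'.1 hS'.1, trace_mul_comm, add_sub_cancel_left]
    _ ≤ ((C + ε • Cbar) * X).trace - ∑ i, b i * y i :=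
        sub_le_sub (hX'.2 X h.primal) (hS'.2 y S h.dual)
    _ = 0 := sub_eq_zero.2 h.trace_objective_mul_eq

end IsComplementary

theorem isComplementary_of_fritzJohn_pos {τ : ℝ} {c : Fin m → ℝ} (hτ : 0 < τ)
    (hX : PrimalFeasible A b X) (hP : (τ • (C + ε • Cbar) - ∑ i, c i • A i).PosSemidef)
    (hPX : (τ • (C + ε • Cbar) - ∑ i, c i • A i) * X = 0) :
    IsComplementary C Cbar A b ε X (τ⁻¹ • c)
      (τ⁻¹ • (τ • (C + ε • Cbar) - ∑ i, c i • A i)) where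
  primal := hX
  dual := by
    refine ⟨(isHermitian_iff_isSymm.1 hP.1).smul _, ?_, hP.smul (inv_nonneg.2 hτ.le)⟩
    simp only [Pi.smul_apply, smul_assoc, ← Finset.smul_sum, ← smul_add, add_sub_cancel,
      inv_smul_smul₀ hτ.ne']
  mul_eq_zero := by
    rw [Matrix.mul_smul, (mul_eq_zero_comm_of_isSymm (isHermitian_iff_isSymm.1 hP.1) hX.1).1 hPX,
      smul_zero]

theorem add_mem_dualOpt_of_posSemidef_neg_sum (hX : PrimalFeasible A b X)
    (hS : (y, S) ∈ DualOpt C Cbar A b ε) {c : Fin m → ℝ} (hP : (-∑ i, c i • A i).PosSemidef)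
    (hPX : (-∑ i, c i • A i) * X = 0) :
    (y + c, S - ∑ i, c i • A i) ∈ DualOpt C Cbar A b ε := by
  have hbc : ∑ i, b i * c i = 0 := by
    have := trace_sum_smul_add_mul A c (-∑ i, c i • A i) X
    simpa only [add_neg_cancel, Matrix.zero_mul, trace_zero, hX.2.1, hPX, add_zero,
      mul_comm (c _), eq_comm] using this
  refine ⟨⟨hS.1.1.sub ?_, ?_, ?_⟩, fun y' S' hS' ↦ (hS.2 y' S' hS').trans_eq ?_⟩
  · simpa using (isHermitian_iff_isSymm.1 hP.1).neg
  · simp only [Pi.add_apply, add_smul, Finset.sum_add_distrib, ← hS.1.2.1]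
    abel
  · simpa only [sub_eq_add_neg] using hS.1.2.2.add hP
  · simp only [Pi.add_apply, mul_add, Finset.sum_add_distrib, hbc, add_zero]

theorem isComplementary_of_mem_primalOpt_of_dualOpt_eq (hC : C.IsSymm) (hCbar : Cbar.IsSymm)
    (hA : ∀ i, (A i).IsSymm) (hX : X ∈ PrimalOpt C Cbar A b ε)
    (hS : DualOpt C Cbar A b ε = {(y, S)}) : IsComplementary C Cbar A b ε X y S := by
  obtain ⟨τ, c, hne, hτ, hP, hPX⟩ := exists_fritzJohn_multipliers hC hCbar hA hX
  rcases hτ.eq_or_lt with rfl | hτ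
  · rw [zero_smul, zero_sub] at hP hPX
    have hmem := add_mem_dualOpt_of_posSemidef_neg_sum hX.1 (hS.ge rfl) hP hPX
    rw [hS, mem_singleton_iff, Prod.mk.injEq, add_eq_left] at hmem
    exact (hne (Prod.ext rfl hmem.1)).elim
  · have h := isComplementary_of_fritzJohn_pos hτ hX.1 hP hPX
    have hmem := h.mem_dualOpt
    rw [hS, mem_singleton_iff, Prod.mk.injEq] at hmem
    rwa [hmem.1, hmem.2] at h

end Duality

section QuadraticMap

variable {𝕜 E F : Type*} [RCLike 𝕜] [NormedAddCommGroup E] [NormedSpace 𝕜 E]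
  [FiniteDimensional 𝕜 E] [NormedAddCommGroup F] [NormedSpace 𝕜 F]

theorem eventually_injective_add_bilinear {L : E →ₗ[𝕜] F} {B : E →ₗ[𝕜] E →ₗ[𝕜] F} {w : E}
    (hw : Function.Injective (L + B w + B.flip w)) :
    ∀ᶠ v in 𝓝 w, Function.Injective (L + B v + B.flip v) := by
  have hcont : Continuous fun v ↦ LinearMap.toContinuousLinearMap L +
      B.toContinuousBilinearMap v + B.flip.toContinuousBilinearMap v := by fun_prop
  exact hcont.continuousAt.eventually (ContinuousLinearMap.isOpen_injective.mem_nhds hw)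

theorem exists_local_rightInverse_add_bilinear {L : E →ₗ[𝕜] E} {B : E →ₗ[𝕜] E →ₗ[𝕜] E} {w : E}
    (hw : Function.Injective (L + B w + B.flip w)) :
    ∃ g : E → E, ContDiffAt 𝕜 ω g (L w + B w w) ∧ g (L w + B w w) = w ∧
      ∀ᶠ p in 𝓝 (L w + B w w), L (g p) + B (g p) (g p) = p := by
  have : CompleteSpace E := FiniteDimensional.complete 𝕜 E
  let Lc := LinearMap.toContinuousLinearMap L
  let Bc := B.toContinuousBilinearMap
  let e : E ≃L[𝕜] E :=
    (LinearEquiv.ofInjectiveEndo (L + B w + B.flip w) hw).toContinuousLinearEquiv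
  have hsmooth : ContDiffAt 𝕜 ω (fun v ↦ Lc v + Bc v v) w :=
    (Lc.contDiff.add
      (Bc.isBoundedBilinearMap.contDiff.comp (contDiff_id.prodMk contDiff_id))).contDiffAt
  have hderiv : HasFDerivAt (fun v ↦ Lc v + Bc v v) (e : E →L[𝕜] E) w := by
    refine (Lc.hasFDerivAt.add
      (Bc.hasFDerivAt_of_bilinear (hasFDerivAt_id w) (hasFDerivAt_id w))).congr_fderiv ?_
    ext d
    simp [Lc, Bc, e, add_assoc]
  have hω : (ω : WithTop ℕ∞) ≠ 0 := by decide
  exact ⟨hsmooth.localInverse hderiv hω, hsmooth.to_localInverse hderiv hω,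
    hsmooth.localInverse_apply_image hderiv hω,
    (hsmooth.hasStrictFDerivAt' hderiv hω).eventually_right_inverse⟩

end QuadraticMap

section OptimalitySystem

variable {n m : ℕ} {C Cbar : Matrix (Fin n) (Fin n) ℝ} {A : Fin m → Matrix (Fin n) (Fin n) ℝ}
  {b : Fin m → ℝ} {ε : ℝ} {X S DX DS : Matrix (Fin n) (Fin n) ℝ} {y Dy : Fin m → ℝ}

/-- The space of all triples `(X, y, S)`, with `X` and `S` not required to be symmetric. -/
abbrev PrimalDual (n m : ℕ) : Type :=
  Matrix (Fin n) (Fin n) ℝ × (Fin m → ℝ) × Matrix (Fin n) (Fin n) ℝ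

/-- The linear part `(X, y, S) ↦ (X - Xᵀ, ⟨A i, X⟩, ∑ i, y i • A i + S)` of the optimality
system. -/
def optimalityLinear (A : Fin m → Matrix (Fin n) (Fin n) ℝ) :
    PrimalDual n m →ₗ[ℝ] PrimalDual n m where
  toFun w := (w.1 - w.1ᵀ, fun i ↦ (A i * w.1).trace, ∑ i, w.2.1 i • A i + w.2.2)
  map_add' v w := by
    refine Prod.ext ?_ (Prod.ext (funext fun i ↦ ?_) ?_)
    · simp [add_sub_add_comm]
    · simp [Matrix.mul_add]
    · simp [add_smul, Finset.sum_add_distrib, add_add_add_comm]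
  map_smul' t w := by
    refine Prod.ext ?_ (Prod.ext (funext fun i ↦ ?_) ?_)
    · simp [smul_sub]
    · simp
    · simp [Finset.smul_sum, smul_smul]

/-- The bilinear part of the optimality system; it shares its slot with the skew-symmetric
`X - Xᵀ` of `optimalityLinear`, so that one equation encodes that `X` is symmetric and
`X * S + S * X = 0`. -/
def optimalityBilinear : PrimalDual n m →ₗ[ℝ] PrimalDual n m →ₗ[ℝ] PrimalDual n m :=
  LinearMap.mk₂ ℝ (fun v w ↦ (v.1 * w.2.2 + (v.1 * w.2.2)ᵀ, 0, 0))
    (fun u v w ↦ by simp [Matrix.add_mul, add_add_add_comm])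
    (fun t v w ↦ by simp)
    (fun u v w ↦ by simp [Matrix.mul_add, add_add_add_comm])
    (fun t v w ↦ by simp)

theorem sub_transpose_add_add_transpose_eq_zero_iff {κ R : Type*} [AddCommGroup R]
    [IsAddTorsionFree R] {X M : Matrix κ κ R} :
    X - Xᵀ + (M + Mᵀ) = 0 ↔ X.IsSymm ∧ M + Mᵀ = 0 := by
  refine ⟨fun h ↦ ?_, fun ⟨hX, hM⟩ ↦ by rw [hX.eq, sub_self, hM, zero_add]⟩
  have : IsAddTorsionFree (Matrix κ κ R) := inferInstanceAs (IsAddTorsionFree (κ → κ → R))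
  have hM : M + Mᵀ = 0 := by
    refine (nsmul_eq_zero_iff_right two_ne_zero).1 ?_
    calc 2 • (M + Mᵀ) = X - Xᵀ + (M + Mᵀ) + (X - Xᵀ + (M + Mᵀ))ᵀ := by
          simp only [transpose_add, transpose_sub, transpose_transpose]
          abel
      _ = 0 := by rw [h, transpose_zero, add_zero]
  rw [hM, add_zero, sub_eq_zero] at h
  exact ⟨h.symm, hM⟩

theorem optimality_eq_iff (hC : C.IsSymm) (hCbar : Cbar.IsSymm) (hA : ∀ i, (A i).IsSymm) :
    optimalityLinear A (X, y, S) + optimalityBilinear (X, y, S) (X, y, S) =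
        (0, b, C + ε • Cbar) ↔
      X.IsSymm ∧ S.IsSymm ∧ X * S + S * X = 0 ∧ (∀ i, (A i * X).trace = b i) ∧
        ∑ i, y i • A i + S = C + ε • Cbar := by
  have hS (h : ∑ i, y i • A i + S = C + ε • Cbar) : S.IsSymm :=
    eq_sub_of_add_eq' h ▸ (hC.add (hCbar.smul ε)).sub (isSymm_sum_smul hA y)
  have htr (hX : X.IsSymm) (hS : S.IsSymm) : (X * S)ᵀ = S * X := by
    rw [transpose_mul, hX.eq, hS.eq]
  simp only [optimalityLinear, optimalityBilinear, LinearMap.coe_mk, AddHom.coe_mk,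
    LinearMap.mk₂_apply, Prod.mk_add_mk, add_zero, Prod.mk.injEq, funext_iff,
    sub_transpose_add_add_transpose_eq_zero_iff]
  grind

theorem optimality_deriv_eq_zero_iff (hX : X.IsSymm) (hS : S.IsSymm) (hA : ∀ i, (A i).IsSymm) :
    (optimalityLinear A + optimalityBilinear (X, y, S) + optimalityBilinear.flip (X, y, S))
        (DX, Dy, DS) = 0 ↔
      DX.IsSymm ∧ DS.IsSymm ∧ (∀ i, (A i * DX).trace = 0) ∧ ∑ i, Dy i • A i + DS = 0 ∧
        DX * S + S * DX + X * DS + DS * X = 0 := by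
  have hDS (h : ∑ i, Dy i • A i + DS = 0) : DS.IsSymm :=
    eq_neg_of_add_eq_zero_right h ▸ (isSymm_sum_smul hA Dy).neg
  have hsplit : DX - DXᵀ + (X * DS + (X * DS)ᵀ) + (DX * S + (DX * S)ᵀ) =
      DX - DXᵀ + (X * DS + DX * S + (X * DS + DX * S)ᵀ) := by
    rw [transpose_add (X * DS)]
    abel
  have htr (hDX : DX.IsSymm) (hDS : DS.IsSymm) : X * DS + DX * S + (X * DS + DX * S)ᵀ =
      DX * S + S * DX + X * DS + DS * X := by
    simp only [transpose_add, transpose_mul, hX.eq, hS.eq, hDX.eq, hDS.eq]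
    abel
  simp only [optimalityLinear, optimalityBilinear, LinearMap.add_apply, LinearMap.flip_apply,
    LinearMap.coe_mk, AddHom.coe_mk, LinearMap.mk₂_apply, Prod.mk_add_mk, add_zero,
    Prod.mk_eq_zero, funext_iff, Pi.zero_apply, hsplit,
    sub_transpose_add_add_transpose_eq_zero_iff]
  grind

theorem injective_optimality_deriv_iff (hX : X.IsSymm) (hS : S.IsSymm)
    (hA : ∀ i, (A i).IsSymm) :
    Function.Injective (optimalityLinear A + optimalityBilinear (X, y, S) +
      optimalityBilinear.flip (X, y, S)) ↔ JNonsingular A X S := by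
  simp only [injective_iff_map_eq_zero, Prod.forall, optimality_deriv_eq_zero_iff hX hS hA,
    JNonsingular, Prod.mk_eq_zero, and_imp]
  exact ⟨fun h DX DS Dy ↦ h DX Dy DS, fun h DX Dy DS ↦ h DX DS Dy⟩

end OptimalitySystem

section StrictComplementarity

theorem exists_posSemidef_add_smul {ι : Type*} [Fintype ι] {X S D : Matrix ι ι ℝ}
    (hX : X.IsSymm) (hS : S.IsSymm) (hD : D.IsSymm) (hXS : X * S = 0) (hDS : D * S = 0)
    (hpd : (X + S).PosDef) : ∃ t : ℝ, t ≠ 0 ∧ (X + t • D).PosSemidef ∧ (X + t • D) * S = 0 := by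
  have hlim : Filter.Tendsto (fun t : ℝ ↦ X + t • D + S) (𝓝[≠] 0) (𝓝 (X + S)) :=
    (Continuous.tendsto' (by fun_prop) 0 _ (by simp)).mono_left nhdsWithin_le_nhds
  obtain ⟨t, ht, ht0⟩ :=
    ((hlim.eventually (eventually_posDef_of_isHermitian hpd)).and self_mem_nhdsWithin).exists
  have hsymm : (X + t • D).IsSymm := hX.add (hD.smul t)
  have hmul : (X + t • D) * S = 0 := by
    rw [Matrix.add_mul, Matrix.smul_mul, hXS, hDS, smul_zero, add_zero]
  refine ⟨t, ht0, (posSemidef_and_mul_eq_zero_of_anticommute (isHermitian_iff_isSymm.2 hsymm)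
    (isHermitian_iff_isSymm.2 hS) ?_ (ht (isHermitian_iff_isSymm.2 (hsymm.add hS))).posSemidef).1,
    hmul⟩
  rw [hmul, (mul_eq_zero_comm_of_isSymm hsymm hS).1 hmul, add_zero]

variable {n m : ℕ} {C Cbar : Matrix (Fin n) (Fin n) ℝ} {A : Fin m → Matrix (Fin n) (Fin n) ℝ}
  {b : Fin m → ℝ} {ε : ℝ} {X S DX DS : Matrix (Fin n) (Fin n) ℝ} {y Dy : Fin m → ℝ}

namespace IsComplementary

theorem primalOpt_eq_singleton (h : IsComplementary C Cbar A b ε X y S)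
    (hJ : JNonsingular A X S) : PrimalOpt C Cbar A b ε = {X} := by
  refine eq_singleton_iff_unique_mem.2 ⟨h.mem_primalOpt, fun X' hX' ↦ sub_eq_zero.1 ?_⟩
  have h' := h.of_mem_primalOpt_of_mem_dualOpt hX' h.mem_dualOpt
  refine (hJ (X' - X) 0 0 (h'.primal.1.sub h.primal.1) isSymm_zero (fun i ↦ ?_) ?_ ?_).1
  · rw [Matrix.mul_sub, trace_sub, h'.primal.2.1, h.primal.2.1, sub_self]
  · simp
  · simp [Matrix.mul_sub, Matrix.sub_mul, h.mul_eq_zero, h.mul_eq_zero_symm, h'.mul_eq_zero,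
      h'.mul_eq_zero_symm]

theorem dualOpt_eq_singleton (h : IsComplementary C Cbar A b ε X y S)
    (hJ : JNonsingular A X S) : DualOpt C Cbar A b ε = {(y, S)} := by
  refine eq_singleton_iff_unique_mem.2 ⟨h.mem_dualOpt, fun ⟨y', S'⟩ hS' ↦ ?_⟩
  have h' := h.of_mem_primalOpt_of_mem_dualOpt h.mem_primalOpt hS'
  have hsum : ∑ i, (y' - y) i • A i + (S' - S) = 0 := by
    simp only [Pi.sub_apply, sub_smul, Finset.sum_sub_distrib]
    rw [sub_add_sub_comm, h'.dual.2.1, h.dual.2.1, sub_self]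
  have hlin : 0 * S + S * 0 + X * (S' - S) + (S' - S) * X = 0 := by
    simp [Matrix.mul_sub, Matrix.sub_mul, h.mul_eq_zero, h.mul_eq_zero_symm, h'.mul_eq_zero,
      h'.mul_eq_zero_symm]
  obtain ⟨-, hy, hS⟩ := hJ 0 (S' - S) (y' - y) isSymm_zero (h'.dual.1.sub h.dual.1) (by simp)
    hsum hlin
  exact Prod.ext (sub_eq_zero.1 hy) (sub_eq_zero.1 hS)

theorem exists_add_smul_primal (h : IsComplementary C Cbar A b ε X y S) (hpd : (X + S).PosDef)
    (hDX : DX.IsSymm) (htr : ∀ i, (A i * DX).trace = 0) (hDXS : DX * S = 0) :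
    ∃ t : ℝ, t ≠ 0 ∧ IsComplementary C Cbar A b ε (X + t • DX) y S := by
  obtain ⟨t, ht, hpsd, hmul⟩ :=
    exists_posSemidef_add_smul h.primal.1 h.dual.1 hDX h.mul_eq_zero hDXS hpd
  refine ⟨t, ht, ⟨h.primal.1.add (hDX.smul t), fun i ↦ ?_, hpsd⟩, h.dual, hmul⟩
  rw [Matrix.mul_add, trace_add, Matrix.mul_smul, trace_smul, h.primal.2.1, htr, smul_zero,
    add_zero]

theorem exists_add_smul_dual (h : IsComplementary C Cbar A b ε X y S) (hpd : (X + S).PosDef)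
    (hDS : DS.IsSymm) (hsum : ∑ i, Dy i • A i + DS = 0) (hDSX : DS * X = 0) :
    ∃ t : ℝ, t ≠ 0 ∧ IsComplementary C Cbar A b ε X (y + t • Dy) (S + t • DS) := by
  obtain ⟨t, ht, hpsd, hmul⟩ := exists_posSemidef_add_smul h.dual.1 h.primal.1 hDS
    h.mul_eq_zero_symm hDSX (add_comm X S ▸ hpd)
  have hsymm : (S + t • DS).IsSymm := h.dual.1.add (hDS.smul t)
  refine ⟨t, ht, h.primal, ⟨hsymm, ?_, hpsd⟩, (mul_eq_zero_comm_of_isSymm hsymm h.primal.1).1 hmul⟩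
  calc ∑ i, (y + t • Dy) i • A i + (S + t • DS)
      = ∑ i, y i • A i + S + t • (∑ i, Dy i • A i + DS) := by
        simp only [Pi.add_apply, Pi.smul_apply, add_smul, smul_assoc, Finset.sum_add_distrib,
          smul_add, Finset.smul_sum]
        abel
    _ = C + ε • Cbar := by rw [hsum, smul_zero, add_zero, h.dual.2.1]

theorem jNonsingular (h : IsComplementary C Cbar A b ε X y S) (hpd : (X + S).PosDef)
    (hP : PrimalOpt C Cbar A b ε = {X}) (hD : DualOpt C Cbar A b ε = {(y, S)}) :
    JNonsingular A X S := by
  intro DX DS Dy hDX hDS htr hsum hlin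
  have horth : (DX * DS).trace = 0 := by
    simpa only [hsum, Matrix.zero_mul, trace_zero, htr, mul_zero, Finset.sum_const_zero, zero_add,
      trace_mul_comm DS, eq_comm] using trace_sum_smul_add_mul A Dy DS DX
  obtain ⟨hDXS, hDSX⟩ := mul_eq_zero_of_linearized_complementarity h.primal.2.2 h.dual.2.2
    h.mul_eq_zero hpd hDS horth hlin
  obtain ⟨s, hs, hprimal⟩ := h.exists_add_smul_primal hpd hDX htr hDXS
  obtain ⟨t, ht, hdual⟩ := h.exists_add_smul_dual hpd hDS hsum hDSX
  have hX := hP.le hprimal.mem_primalOpt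
  have hS := hD.le hdual.mem_dualOpt
  simp only [mem_singleton_iff, Prod.mk.injEq, add_eq_left, smul_eq_zero, hs, ht, false_or]
    at hX hS
  exact ⟨hX, hS⟩

theorem optimality_eq (hC : C.IsSymm) (hCbar : Cbar.IsSymm) (hA : ∀ i, (A i).IsSymm)
    (h : IsComplementary C Cbar A b ε X y S) :
    optimalityLinear A (X, y, S) + optimalityBilinear (X, y, S) (X, y, S) =
      (0, b, C + ε • Cbar) := by
  refine (optimality_eq_iff hC hCbar hA).2 ⟨h.primal.1, h.dual.1, ?_, h.primal.2.1, h.dual.2.1⟩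
  rw [h.mul_eq_zero, h.mul_eq_zero_symm, add_zero]

theorem of_optimality_eq (hC : C.IsSymm) (hCbar : Cbar.IsSymm) (hA : ∀ i, (A i).IsSymm)
    (h : optimalityLinear A (X, y, S) + optimalityBilinear (X, y, S) (X, y, S) =
      (0, b, C + ε • Cbar)) (hpsd : (X + S).PosSemidef) :
    IsComplementary C Cbar A b ε X y S := by
  obtain ⟨hX, hS, hXS, htr, hsum⟩ := (optimality_eq_iff hC hCbar hA).1 h
  obtain ⟨hXpsd, hSpsd, hmul⟩ := posSemidef_and_mul_eq_zero_of_anticommute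
    (isHermitian_iff_isSymm.2 hX) (isHermitian_iff_isSymm.2 hS) hXS hpsd
  exact ⟨⟨hX, htr, hXpsd⟩, ⟨hS, hsum, hSpsd⟩, hmul⟩

end IsComplementary

end StrictComplementarity

section Branch

variable {n m : ℕ} {C Cbar : Matrix (Fin n) (Fin n) ℝ} {A : Fin m → Matrix (Fin n) (Fin n) ℝ}
  {b : Fin m → ℝ} {ε εbar : ℝ} {X S : Matrix (Fin n) (Fin n) ℝ} {y : Fin m → ℝ}

theorem exists_contDiffAt_optimality_eq (hC : C.IsSymm) (hCbar : Cbar.IsSymm)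
    (hA : ∀ i, (A i).IsSymm) (h : IsComplementary C Cbar A b εbar X y S)
    (hJ : JNonsingular A X S) :
    ∃ w : ℝ → PrimalDual n m, w εbar = (X, y, S) ∧ ContDiffAt ℝ ω w εbar ∧
      ∀ᶠ ε in 𝓝 εbar,
        optimalityLinear A (w ε) + optimalityBilinear (w ε) (w ε) = (0, b, C + ε • Cbar) := by
  obtain ⟨g, hg, hgw, hinv⟩ := exists_local_rightInverse_add_bilinear
    ((injective_optimality_deriv_iff (y := y) h.primal.1 h.dual.1 hA).2 hJ)
  rw [h.optimality_eq hC hCbar hA] at hg hgw hinv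
  have hrhs : ContDiff ℝ ω fun ε : ℝ ↦ ((0, b, C + ε • Cbar) : PrimalDual n m) := by fun_prop
  exact ⟨fun ε ↦ g (0, b, C + ε • Cbar), hgw, hg.comp εbar hrhs.contDiffAt,
    hrhs.continuous.continuousAt.eventually hinv⟩

theorem eventually_jNonsingular (hA : ∀ i, (A i).IsSymm) (hX : X.IsSymm) (hS : S.IsSymm)
    (hJ : JNonsingular A X S) :
    ∀ᶠ w : PrimalDual n m in 𝓝 (X, y, S), w.1.IsSymm → w.2.2.IsSymm →
      JNonsingular A w.1 w.2.2 :=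
  (eventually_injective_add_bilinear ((injective_optimality_deriv_iff hX hS hA).2 hJ)).mono
    fun _ hw hX' hS' ↦ (injective_optimality_deriv_iff hX' hS' hA).1 hw

theorem eventually_isComplementary_of_optimality_eq (hC : C.IsSymm) (hCbar : Cbar.IsSymm)
    (hA : ∀ i, (A i).IsSymm) (hpd : (X + S).PosDef) :
    ∀ᶠ w : PrimalDual n m in 𝓝 (X, y, S), ∀ ε : ℝ,
      optimalityLinear A w + optimalityBilinear w w = (0, b, C + ε • Cbar) →
        IsComplementary C Cbar A b ε w.1 w.2.1 w.2.2 ∧ (w.1 + w.2.2).PosDef := by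
  have hcont : Continuous fun w : PrimalDual n m ↦ w.1 + w.2.2 := by fun_prop
  filter_upwards [(hcont.tendsto (X, y, S)).eventually (eventually_posDef_of_isHermitian hpd)]
    with w hw ε hε
  obtain ⟨hX, hS, -⟩ := (optimality_eq_iff hC hCbar hA).1 hε
  have hw := hw (isHermitian_iff_isSymm.2 (hX.add hS))
  exact ⟨.of_optimality_eq hC hCbar hA hε hw.posSemidef, hw⟩

theorem exists_contDiffAt_isComplementary (hC : C.IsSymm) (hCbar : Cbar.IsSymm)
    (hA : ∀ i, (A i).IsSymm) (h : IsComplementary C Cbar A b εbar X y S) (hpd : (X + S).PosDef)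
    (hJ : JNonsingular A X S) :
    ∃ w : ℝ → PrimalDual n m, w εbar = (X, y, S) ∧ ContDiffAt ℝ ω w εbar ∧
      ∀ᶠ ε in 𝓝 εbar, IsComplementary C Cbar A b ε (w ε).1 (w ε).2.1 (w ε).2.2 ∧
        ((w ε).1 + (w ε).2.2).PosDef ∧ JNonsingular A (w ε).1 (w ε).2.2 ∧
          (w ε).1.rank = X.rank ∧ (w ε).2.2.rank = S.rank := by
  obtain ⟨w, hw, hsmooth, hopt⟩ := exists_contDiffAt_optimality_eq hC hCbar hA h hJ
  have hlim : Filter.Tendsto w (𝓝 εbar) (𝓝 (X, y, S)) := hw ▸ hsmooth.continuousAt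
  have hcont : Continuous fun w : PrimalDual n m ↦ (w.1, w.2.2) := by fun_prop
  refine ⟨w, hw, hsmooth, ?_⟩
  filter_upwards [hopt,
    hlim.eventually (eventually_isComplementary_of_optimality_eq (b := b) hC hCbar hA hpd),
    hlim.eventually (eventually_jNonsingular hA h.primal.1 h.dual.1 hJ),
    ((hcont.tendsto (X, y, S)).comp hlim).eventually
      (eventually_rank_eq_of_mul_eq_zero h.mul_eq_zero hpd)] with ε hε hcomp hjac hrank
  obtain ⟨hε, hε_pd⟩ := hcomp ε hε
  exact ⟨hε, hε_pd, hjac hε.primal.1 hε.dual.1, hrank hε.mul_eq_zero hε_pd⟩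

end Branch

section TransitionPoint

variable {n m : ℕ} {C Cbar : Matrix (Fin n) (Fin n) ℝ} {A : Fin m → Matrix (Fin n) (Fin n) ℝ}
  {b : Fin m → ℝ} {ε ε' εbar : ℝ} {X X' S S' : Matrix (Fin n) (Fin n) ℝ} {y y' : Fin m → ℝ}

theorem MaxComp.eq_of_eq_singleton {X₀ S₀ : Matrix (Fin n) (Fin n) ℝ} {y₀ : Fin m → ℝ}
    (h : MaxComp C Cbar A b ε X y S) (hP : PrimalOpt C Cbar A b ε = {X₀})
    (hD : DualOpt C Cbar A b ε = {(y₀, S₀)}) : X = X₀ ∧ S = S₀ :=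
  ⟨hP.le (intrinsicInterior_subset h.1),
    congrArg Prod.snd (hD.le (intrinsicInterior_subset h.2) : (y, S) = (y₀, S₀))⟩

theorem dimsMatch_of_eq_singleton (hP : PrimalOpt C Cbar A b ε = {X})
    (hD : DualOpt C Cbar A b ε = {(y, S)}) (hP' : PrimalOpt C Cbar A b ε' = {X'})
    (hD' : DualOpt C Cbar A b ε' = {(y', S')}) (hX : X.rank = X'.rank) (hS : S.rank = S'.rank) :
    DimsMatch C Cbar A b ε ε' := by
  intro X₁ y₁ S₁ X₂ y₂ S₂ h₁ h₂
  obtain ⟨rfl, rfl⟩ := h₁.eq_of_eq_singleton hP hD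
  obtain ⟨rfl, rfl⟩ := h₂.eq_of_eq_singleton hP' hD'
  exact ⟨hX, hS⟩

theorem not_isTransitionPoint_of_eventually_dimsMatch
    (h : ∀ᶠ ε in 𝓝 εbar, DimsMatch C Cbar A b ε εbar) :
    ¬ IsTransitionPoint C Cbar A b εbar := by
  rintro ⟨-, -, htrans⟩
  obtain ⟨ξ, hξ, hball⟩ := Metric.eventually_nhds_iff_ball.1 h
  obtain ⟨ε, ⟨hε, -⟩, hne⟩ := htrans ξ hξ
  exact hne (hball ε (Real.ball_eq_Ioo εbar ξ ▸ hε))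

end TransitionPoint

theorem stmt19_general {n m : ℕ} {C Cbar : Matrix (Fin n) (Fin n) ℝ}
    {A : Fin m → Matrix (Fin n) (Fin n) ℝ} {b : Fin m → ℝ} (hC : C.IsSymm) (hCbar : Cbar.IsSymm)
    (hA : ∀ i, (A i).IsSymm) {εbar : ℝ} {Xs Ss : Matrix (Fin n) (Fin n) ℝ} {ys : Fin m → ℝ}
    (hPs : PrimalOpt C Cbar A b εbar = {Xs}) (hDs : DualOpt C Cbar A b εbar = {(ys, Ss)})
    (hsc : (Xs + Ss).PosDef) :
    ∃ ξ : ℝ, 0 < ξ ∧ Ioo (εbar - ξ) (εbar + ξ) ⊆ interior (Eset C Cbar A b) ∧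
      ∃ (Xf : ℝ → Matrix (Fin n) (Fin n) ℝ) (yf : ℝ → Fin m → ℝ)
          (Sf : ℝ → Matrix (Fin n) (Fin n) ℝ),
        (∀ ε ∈ Ioo (εbar - ξ) (εbar + ξ),
          PrimalOpt C Cbar A b ε = {Xf ε} ∧ DualOpt C Cbar A b ε = {(yf ε, Sf ε)}) ∧
        ContDiffOn ℝ ω (fun ε ↦ (Xf ε, yf ε, Sf ε)) (Ioo (εbar - ξ) (εbar + ξ)) ∧
        Xf εbar = Xs ∧ yf εbar = ys ∧ Sf εbar = Ss ∧
        (∀ ε ∈ Ioo (εbar - ξ) (εbar + ξ),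
          (Xf ε + Sf ε).PosDef ∧ (Xf ε).rank = Xs.rank ∧ (Sf ε).rank = Ss.rank) ∧
        ¬ IsTransitionPoint C Cbar A b εbar := by
  have h := isComplementary_of_mem_primalOpt_of_dualOpt_eq hC hCbar hA (hPs.ge rfl) hDs
  obtain ⟨w, hw, hsmooth, hcomp⟩ :=
    exists_contDiffAt_isComplementary hC hCbar hA h hsc (h.jNonsingular hsc hPs hDs)
  have hE : ∀ᶠ ε in 𝓝 εbar, ε ∈ interior (Eset C Cbar A b) :=
    hcomp.eventually_nhds.mono fun _ hε ↦
      mem_interior_Eset_of_eventually (hε.mono fun _ h' ↦ ⟨_, _, h'.1.dual⟩)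
  have htrans : ¬ IsTransitionPoint C Cbar A b εbar :=
    not_isTransitionPoint_of_eventually_dimsMatch <| hcomp.mono fun _ ⟨hε, _, hJ, hX, hS⟩ ↦
      dimsMatch_of_eq_singleton (hε.primalOpt_eq_singleton hJ) (hε.dualOpt_eq_singleton hJ)
        hPs hDs hX hS
  obtain ⟨ξ, hξ, hball⟩ := Metric.eventually_nhds_iff_ball.1
    ((hcomp.and hE).and (hsmooth.eventually (by decide)))
  simp only [Real.ball_eq_Ioo] at hball
  refine ⟨ξ, hξ, fun ε hε ↦ (hball ε hε).1.2, fun ε ↦ (w ε).1, fun ε ↦ (w ε).2.1,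
    fun ε ↦ (w ε).2.2, fun ε hε ↦ ?_, fun ε hε ↦ (hball ε hε).2.contDiffWithinAt,
    congrArg Prod.fst hw, congrArg (·.2.1) hw, congrArg (·.2.2) hw, fun ε hε ↦ ?_, htrans⟩
  · obtain ⟨hε, -, hJ, -⟩ := (hball ε hε).1.1
    exact ⟨hε.primalOpt_eq_singleton hJ, hε.dualOpt_eq_singleton hJ⟩
  · obtain ⟨-, hpd, -, hrank⟩ := (hball ε hε).1.1
    exact ⟨hpd, hrank⟩

/-- around a unique, strictly complementary optimal solution the optimal
solutions stay unique, vary continuously differentiably, remain strictly complementary,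
the ranks are locally constant, and `ε̄` is not a transition point. -/
theorem stmt19 {n m : ℕ} (C Cbar : Matrix (Fin n) (Fin n) ℝ)
    (A : Fin m → Matrix (Fin n) (Fin n) ℝ) (b : Fin m → ℝ)
    (hSA : StandingAssumptions C Cbar A b)
    (εbar : ℝ) (hεbar : εbar ∈ interior (Eset C Cbar A b))
    (Xs Ss : Matrix (Fin n) (Fin n) ℝ) (ys : Fin m → ℝ)
    (hPs : PrimalOpt C Cbar A b εbar = {Xs})
    (hDs : DualOpt C Cbar A b εbar = {(ys, Ss)})
    (hsc : (Xs + Ss).PosDef) :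
    ∃ ξ : ℝ, 0 < ξ ∧ Set.Ioo (εbar - ξ) (εbar + ξ) ⊆ interior (Eset C Cbar A b) ∧
      ∃ (Xf : ℝ → Matrix (Fin n) (Fin n) ℝ) (yf : ℝ → Fin m → ℝ)
          (Sf : ℝ → Matrix (Fin n) (Fin n) ℝ),
        (∀ ε ∈ Set.Ioo (εbar - ξ) (εbar + ξ),
          PrimalOpt C Cbar A b ε = {Xf ε} ∧ DualOpt C Cbar A b ε = {(yf ε, Sf ε)}) ∧
        ContDiffOn ℝ 1 (fun ε => (Xf ε, yf ε, Sf ε)) (Set.Ioo (εbar - ξ) (εbar + ξ)) ∧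
        Xf εbar = Xs ∧ yf εbar = ys ∧ Sf εbar = Ss ∧
        (∀ ε ∈ Set.Ioo (εbar - ξ) (εbar + ξ),
          (Xf ε + Sf ε).PosDef ∧
          Module.finrank ℝ (LinearMap.range (Xf ε).mulVecLin) =
            Module.finrank ℝ (LinearMap.range Xs.mulVecLin) ∧
          Module.finrank ℝ (LinearMap.range (Sf ε).mulVecLin) =
            Module.finrank ℝ (LinearMap.range Ss.mulVecLin)) ∧
        ¬ IsTransitionPoint C Cbar A b εbar := by
  obtain ⟨hC, hCbar, hA, -⟩ := hSA
  obtain ⟨ξ, hξ, hE, Xf, yf, Sf, hopt, hdiff, h⟩ := stmt19_general hC hCbar hA hPs hDs hsc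
  exact ⟨ξ, hξ, hE, Xf, yf, Sf, hopt, hdiff.of_le le_top, h⟩
end
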